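/- arXiv:math/9308207 — 2 statements merged into one kernel-verified Lean document; each statement's English description precedes it below -/
import Mathlib

section
/- Let 1 ≤ p ≤ ∞ and let u : M_N → M_m be a linear map whose regular norm relative to p satisfies ‖u‖_r ≤ C. Then for every n ≥ 1 and every x ∈ M_N ⊗ M_n, ‖(u ⊗ id_{M_n})(x)‖_{S_p} ≤ C ‖x‖_{S_p}, where ‖·‖_{S_p} denotes the plain Schatten p-norm of the matrix x on ℂ^N ⊗ ℂ^n, respectively of (u ⊗ id_{M_n})(x) on ℂ^m ⊗ ℂ^n. (Matrix-algebra form of Proposition 2.2: every regular map is completely bounded with ‖u‖_{cb} ≤ ‖u‖_r, using the Fubini identification S_p^n[S_p^N] = S_p^{nN}.) -/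
open scoped Kronecker ENNReal Classical ComplexOrder
open Matrix

noncomputable section

/-- The operator norm (`S_∞` norm) of a complex matrix, acting on Euclidean space. -/
def opNorm {ι : Type} [Fintype ι] [DecidableEq ι] (a : Matrix ι ι ℂ) : ℝ :=
  ‖LinearMap.toContinuousLinearMap (Matrix.toEuclideanLin a)‖

/-- The Schatten `p`-norm of a complex matrix: the `ℓ^p` norm of its singular values
(the square roots of the eigenvalues of `aᴴ * a`); for `p = ∞` it is the operator norm. -/
def schattenNorm {ι : Type} [Fintype ι] [DecidableEq ι] (p : ℝ≥0∞) (a : Matrix ι ι ℂ) : ℝ :=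
  if p = ∞ then opNorm a
  else (∑ i, Real.sqrt ((Matrix.posSemidef_conjTranspose_mul_self a).isHermitian.eigenvalues i) ^ p.toReal)
      ^ (1 / p.toReal)

/-- Pisier's vector-valued Schatten norm `‖x‖_{S_p^N[M_n]}` on `M_N ⊗ M_n`:
the infimum of `‖a‖_{S_{2p}} ‖y‖_{S_∞} ‖b‖_{S_{2p}}` over factorizations
`x = (a ⊗ 1) · y · (b ⊗ 1)`. -/
def pisierNorm (p : ℝ≥0∞) {N n : ℕ} (x : Matrix (Fin N × Fin n) (Fin N × Fin n) ℂ) : ℝ :=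
  sInf { r | ∃ (a b : Matrix (Fin N) (Fin N) ℂ)
      (y : Matrix (Fin N × Fin n) (Fin N × Fin n) ℂ),
      x = (a ⊗ₖ (1 : Matrix (Fin n) (Fin n) ℂ)) * y * (b ⊗ₖ (1 : Matrix (Fin n) (Fin n) ℂ)) ∧
      r = schattenNorm (2 * p) a * opNorm y * schattenNorm (2 * p) b }

/-- The amplification `u ⊗ id_{M_n} : M_N ⊗ M_n → M_m ⊗ M_n` of a map `u : M_N → M_m`,
acting as `u` on each `M_n`-block entry. -/
def amp {N m n : ℕ} (u : Matrix (Fin N) (Fin N) ℂ → Matrix (Fin m) (Fin m) ℂ)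
    (x : Matrix (Fin N × Fin n) (Fin N × Fin n) ℂ) : Matrix (Fin m × Fin n) (Fin m × Fin n) ℂ :=
  Matrix.of fun ik jl => u (Matrix.of fun i j => x (i, ik.2) (j, jl.2)) ik.1 jl.1

/-- The amplification `id_{M_n} ⊗ u : M_n ⊗ M_N → M_n ⊗ M_m` of a map `u : M_N → M_m`. -/
def ampLeft {n N m : ℕ} (u : Matrix (Fin N) (Fin N) ℂ → Matrix (Fin m) (Fin m) ℂ)
    (x : Matrix (Fin n × Fin N) (Fin n × Fin N) ℂ) : Matrix (Fin n × Fin m) (Fin n × Fin m) ℂ :=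
  Matrix.of fun ki lj => u (Matrix.of fun i j => x (ki.1, i) (lj.1, j)) ki.2 lj.2

/-- The trace pairing `T : M_k ⊗ M_k → ℂ`, with `T(a ⊗ b) = tr(ᵗa·b)`; writing
`z` as a `k×k` matrix of blocks `z_{ij} ∈ M_k`, `T(z) = Σ_{i,j} (z_{ij})_{ij}`. -/
def tracePair {k : ℕ} (z : Matrix (Fin k × Fin k) (Fin k × Fin k) ℂ) : ℂ :=
  ∑ i : Fin k, ∑ j : Fin k, z (i, i) (j, j)

/-- A map `u : M_N → M_m` is completely positive if all its amplifications
`id_{M_n} ⊗ u` preserve positive semidefiniteness. -/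
def CompletelyPositive {N m : ℕ}
    (u : Matrix (Fin N) (Fin N) ℂ → Matrix (Fin m) (Fin m) ℂ) : Prop :=
  ∀ (n : ℕ) (x : Matrix (Fin n × Fin N) (Fin n × Fin N) ℂ),
    x.PosSemidef → (ampLeft u x).PosSemidef

/-- The regular norm (relative to `p`) of `u : M_N → M_m`: the supremum in `[0,∞]`
over `n ≥ 1` of the norms of the amplifications `u ⊗ id_{M_n}` from
`(M_N ⊗ M_n, ‖·‖_{S_p^N[M_n]})` to `(M_m ⊗ M_n, ‖·‖_{S_p^m[M_n]})`. -/
def regNorm (p : ℝ≥0∞) {N m : ℕ}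
    (u : Matrix (Fin N) (Fin N) ℂ → Matrix (Fin m) (Fin m) ℂ) : ℝ≥0∞ :=
  ⨆ (n : ℕ) (x : Matrix (Fin N × Fin (n + 1)) (Fin N × Fin (n + 1)) ℂ)
    (_ : pisierNorm p x ≤ 1), ENNReal.ofReal (pisierNorm p (amp u x))

/-- Pisier's norm `ρ_p` on `M_n ⊗ M_m` (with `q` the conjugate exponent `p'`):
the infimum of `‖γ‖_{S_{2p}} ‖α‖_{S_{2p'}} ‖g‖_{S_∞} ‖δ‖_{S_{2p}} ‖β‖_{S_{2p'}}`
over factorizations `a = (γ ⊗ α) · g · (δ ⊗ β)`. -/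
def rho (p q : ℝ≥0∞) {n m : ℕ} (a : Matrix (Fin n × Fin m) (Fin n × Fin m) ℂ) : ℝ :=
  sInf { r | ∃ (γ δ : Matrix (Fin n) (Fin n) ℂ) (α β : Matrix (Fin m) (Fin m) ℂ)
      (g : Matrix (Fin n × Fin m) (Fin n × Fin m) ℂ),
      a = (γ ⊗ₖ α) * g * (δ ⊗ₖ β) ∧
      r = schattenNorm (2 * p) γ * schattenNorm (2 * q) α * opNorm g *
          schattenNorm (2 * p) δ * schattenNorm (2 * q) β }

/-- The amplification `u ⊗ id_{M_n}` of a map `u` defined only on a subspace `S ⊆ M_N`,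
applied to an element of `M_N ⊗ M_n` all of whose `M_N`-valued block entries lie in `S`. -/
def ampOn {N m n : ℕ} (S : Submodule ℂ (Matrix (Fin N) (Fin N) ℂ))
    (u : S →ₗ[ℂ] Matrix (Fin m) (Fin m) ℂ)
    (x : Matrix (Fin N × Fin n) (Fin N × Fin n) ℂ)
    (h : ∀ k l : Fin n, (Matrix.of fun i j => x (i, k) (j, l)) ∈ S) :
    Matrix (Fin m × Fin n) (Fin m × Fin n) ℂ :=
  Matrix.of fun ik jl => u ⟨Matrix.of fun i j => x (i, ik.2) (j, jl.2), h ik.2 jl.2⟩ ik.1 jl.1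

end

/-!
Write `θ = 1/p`. If `‖x‖_{S_p} < s`, a singular value decomposition gives
`x = P ^ (θ/2) * T * Q ^ (θ/2)` with `P`, `Q` positive definite of trace at most one and `‖T‖ ≤ s`.
Dually, `‖v‖_{S_p}` is the supremum of `|tr (v * w)|` over
`w = P' ^ ((1-θ)/2) * T' * Q' ^ ((1-θ)/2)` with `‖T'‖ ≤ 1`.

For `x ∈ M_N ⊗ M_n` the factor `P ^ (θ/2)` splits into `P₁ ^ (θ/2) ⊗ 1`, with `P₁` the marginal of
`P` on `M_N`, and a remainder analytic in `θ`; likewise for `Q`, `P'` and `Q'`. Contracting `x`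
over `M_n` against the remainder of `w` gives an element of `M_N ⊗ M_m` of Pisier norm at most
`‖T‖ * ‖T'‖`, by the three lines theorem. This contraction commutes with the amplification of
`u : M_N → M_m`, and Hölder's inequality bounds the trace pairing `tr (v * w)` by the Pisier norm
of the contraction of `v = (u ⊗ id) x`.
-/

noncomputable section

namespace PisierSchatten

open scoped Matrix.Norms.L2Operator

section OperatorNorm

variable {ι κ ρ σ : Type*}

lemma submatrix_prodComm_kronecker (A : Matrix ι κ ℂ) (B : Matrix ρ σ ℂ) :
    (A ⊗ₖ B).submatrix (Equiv.prodComm ρ ι) (Equiv.prodComm σ κ) = B ⊗ₖ A := by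
  ext
  exact mul_comm _ _

variable [Fintype ι] [Fintype κ] [Fintype ρ] [Fintype σ]

open scoped MatrixOrder in
lemma l2_opNorm_le_iff_posSemidef [DecidableEq κ] {A : Matrix ι κ ℂ} {r : ℝ} (hr : 0 ≤ r) :
    ‖A‖ ≤ r ↔ ((r ^ 2) • (1 : Matrix κ κ ℂ) - Aᴴ * A).PosSemidef := by
  classical
  rw [← Matrix.le_iff, ← Algebra.algebraMap_eq_smul_one,
    ← CStarAlgebra.norm_le_iff_le_algebraMap _ (sq_nonneg r)
      (posSemidef_conjTranspose_mul_self A).nonneg,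
    l2_opNorm_conjTranspose_mul_self, ← pow_two,
    pow_le_pow_iff_left₀ (norm_nonneg A) hr two_ne_zero]

lemma l2_opNorm_transpose_le [DecidableEq ι] [DecidableEq κ] (A : Matrix ι κ ℂ) :
    ‖Aᵀ‖ ≤ ‖A‖ := by
  have h := (l2_opNorm_le_iff_posSemidef (norm_nonneg A)).1 (l2_opNorm_conjTranspose A).le
  rw [l2_opNorm_le_iff_posSemidef (norm_nonneg A)]
  simpa only [conjTranspose_conjTranspose, transpose_sub, transpose_smul, transpose_one,
    transpose_mul, conjTranspose_transpose_eq_transpose_conjTranspose] using h.transpose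

lemma l2_opNorm_kronecker_one_le [DecidableEq κ] [DecidableEq ρ] (A : Matrix ι κ ℂ) :
    ‖A ⊗ₖ (1 : Matrix ρ ρ ℂ)‖ ≤ ‖A‖ := by
  have h := (l2_opNorm_le_iff_posSemidef (norm_nonneg A)).1 le_rfl
  have hsub : ‖A‖ ^ 2 • (1 : Matrix (κ × ρ) (κ × ρ) ℂ) -
      (A ⊗ₖ (1 : Matrix ρ ρ ℂ))ᴴ * (A ⊗ₖ (1 : Matrix ρ ρ ℂ)) =
      (‖A‖ ^ 2 • (1 : Matrix κ κ ℂ) - Aᴴ * A) ⊗ₖ (1 : Matrix ρ ρ ℂ) := by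
    rw [conjTranspose_kronecker, ← mul_kronecker_mul, conjTranspose_one, one_mul,
      ← one_kronecker_one, ← smul_kronecker, sub_eq_iff_eq_add, ← add_kronecker, sub_add_cancel]
  rw [l2_opNorm_le_iff_posSemidef (norm_nonneg A), hsub]
  exact h.kronecker PosSemidef.one

lemma l2_opNorm_submatrix_equiv_le [DecidableEq κ] [DecidableEq σ] (A : Matrix ι κ ℂ)
    (e : ρ ≃ ι) (f : σ ≃ κ) : ‖A.submatrix e f‖ ≤ ‖A‖ := by
  have h := ((l2_opNorm_le_iff_posSemidef (norm_nonneg A)).1 le_rfl).submatrix f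
  rw [l2_opNorm_le_iff_posSemidef (norm_nonneg A), conjTranspose_submatrix, submatrix_mul_equiv]
  simpa [submatrix_sub, submatrix_smul] using h

lemma l2_opNorm_kronecker_le [DecidableEq κ] [DecidableEq σ] (A : Matrix ι κ ℂ)
    (B : Matrix ρ σ ℂ) : ‖A ⊗ₖ B‖ ≤ ‖A‖ * ‖B‖ := by
  classical
  calc ‖A ⊗ₖ B‖ = ‖(A ⊗ₖ (1 : Matrix ρ ρ ℂ)) * ((1 : Matrix κ κ ℂ) ⊗ₖ B)‖ := by
        rw [← mul_kronecker_mul, Matrix.mul_one, Matrix.one_mul]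
    _ ≤ ‖A ⊗ₖ (1 : Matrix ρ ρ ℂ)‖ * ‖(1 : Matrix κ κ ℂ) ⊗ₖ B‖ := l2_opNorm_mul _ _
    _ ≤ ‖A‖ * ‖B‖ := by
        gcongr
        · exact l2_opNorm_kronecker_one_le A
        · rw [← submatrix_prodComm_kronecker]
          exact (l2_opNorm_submatrix_equiv_le _ _ _).trans (l2_opNorm_kronecker_one_le B)

lemma l2_opNorm_le_one_of_conjTranspose_mul_self [DecidableEq κ] {A : Matrix ι κ ℂ}
    (h : Aᴴ * A = 1) : ‖A‖ ≤ 1 := by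
  rw [l2_opNorm_le_iff_posSemidef zero_le_one, h]
  simpa using PosSemidef.zero

/-- The pairing is bilinear: no coordinate of `ξ` is conjugated. -/
lemma norm_dotProduct_mulVec_le [DecidableEq κ] (A : Matrix ι κ ℂ) (ξ : ι → ℂ) (η : κ → ℂ) :
    ‖ξ ⬝ᵥ (A *ᵥ η)‖ ≤ ‖WithLp.toLp 2 ξ‖ * ‖A‖ * ‖WithLp.toLp 2 η‖ := by
  have h := norm_inner_le_norm (𝕜 := ℂ) (WithLp.toLp 2 (star ξ)) (WithLp.toLp 2 (A *ᵥ η))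
  rw [EuclideanSpace.inner_toLp_toLp, star_star, dotProduct_comm] at h
  have hstar : ‖WithLp.toLp 2 (star ξ)‖ = ‖WithLp.toLp 2 ξ‖ := by simp [EuclideanSpace.norm_eq]
  rw [hstar] at h
  rw [mul_assoc]
  exact h.trans (by gcongr; exact l2_opNorm_mulVec A (WithLp.toLp 2 η))

end OperatorNorm

section SingularValues

lemma conjTranspose_diagonal_ofReal {ι : Type*} [DecidableEq ι] (s : ι → ℝ) :
    (diagonal fun i => (s i : ℂ))ᴴ = diagonal fun i => (s i : ℂ) := by
  simp [diagonal_conjTranspose, Pi.star_def]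

variable {ι : Type*} [Fintype ι] [DecidableEq ι]

lemma unitaryGroup_conjTranspose_mul_self (U : unitaryGroup ι ℂ) :
    (U : Matrix ι ι ℂ)ᴴ * (U : Matrix ι ι ℂ) = 1 :=
  Unitary.coe_star_mul_self U

lemma unitaryGroup_mul_conjTranspose_self (U : unitaryGroup ι ℂ) :
    (U : Matrix ι ι ℂ) * (U : Matrix ι ι ℂ)ᴴ = 1 :=
  Unitary.coe_mul_star_self U

lemma norm_unitary_mul_diagonal_mul_conjTranspose (U V : unitaryGroup ι ℂ) (f : ι → ℂ) :
    ‖(U : Matrix ι ι ℂ) * diagonal f * (V : Matrix ι ι ℂ)ᴴ‖ = ‖f‖ := by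
  rw [← star_eq_conjTranspose, ← Unitary.coe_star, CStarRing.norm_mul_coe_unitary,
    CStarRing.norm_coe_unitary_mul, l2_opNorm_diagonal]

lemma trace_unitary_mul_diagonal_mul (U V : unitaryGroup ι ℂ) (f g : ι → ℂ) :
    ((U : Matrix ι ι ℂ) * diagonal f * (V : Matrix ι ι ℂ)ᴴ *
      ((V : Matrix ι ι ℂ) * diagonal g * (U : Matrix ι ι ℂ)ᴴ)).trace = ∑ i, f i * g i := by
  simp only [Matrix.mul_assoc]
  rw [← Matrix.mul_assoc (V : Matrix ι ι ℂ)ᴴ, unitaryGroup_conjTranspose_mul_self, Matrix.one_mul,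
    trace_mul_comm]
  simp only [Matrix.mul_assoc]
  rw [unitaryGroup_conjTranspose_mul_self, Matrix.mul_one, diagonal_mul_diagonal, trace_diagonal]

lemma exists_unitary_eq_mul_diagonal {W : Matrix ι ι ℂ} {s : ι → ℝ}
    (h : Wᴴ * W = diagonal fun i => (s i : ℂ) ^ 2) :
    ∃ U : unitaryGroup ι ℂ, W = U * diagonal fun i => (s i : ℂ) := by
  let w : ι → EuclideanSpace ℂ ι := fun j => WithLp.toLp 2 (W.col j)
  have hinner (i j : ι) : inner ℂ (w i) (w j) = if i = j then (s i : ℂ) ^ 2 else 0 := by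
    exact (inner_matrix_col_col W W i j).trans (by rw [h, diagonal_apply])
  have horth : Orthonormal ℂ ({j | s j ≠ 0}.domRestrict fun j => (s j : ℂ)⁻¹ • w j) := by
    rw [orthonormal_iff_ite]
    rintro ⟨i, hi : s i ≠ 0⟩ ⟨j, -⟩
    simp only [Set.domRestrict_apply, inner_smul_left, inner_smul_right, hinner, Subtype.mk.injEq]
    split_ifs with hij
    · subst hij
      simp [pow_two, hi]
    · simp
  obtain ⟨b, hb⟩ := horth.exists_orthonormalBasis_extension_of_card_eq (by simp)
  refine ⟨⟨_, (EuclideanSpace.basisFun ι ℂ).toMatrix_orthonormalBasis_mem_unitary b⟩, ?_⟩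
  ext i j
  rw [mul_diagonal]
  by_cases hj : s j = 0
  · have hw : w j = 0 := by simpa [hj] using hinner j j
    simpa [w, hj] using congrFun (congrArg WithLp.ofLp hw) i
  · simp [Module.Basis.toMatrix_apply, hb j hj, w, hj, mul_comm]

/-- A singular value decomposition `x = U diag(s) Vᴴ`; the singular values are not ordered. -/
structure IsSVD (x : Matrix ι ι ℂ) (U V : unitaryGroup ι ℂ) (s : ι → ℝ) : Prop where
  nonneg : ∀ i, 0 ≤ s i
  eq : x = U * diagonal (fun i => (s i : ℂ)) * (V : Matrix ι ι ℂ)ᴴ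

lemma IsSVD.conjTranspose {x : Matrix ι ι ℂ} {U V : unitaryGroup ι ℂ}
    {s : ι → ℝ} (h : IsSVD x U V s) : IsSVD xᴴ V U s where
  nonneg := h.nonneg
  eq := by
    simp only [h.eq, conjTranspose_mul, conjTranspose_conjTranspose, conjTranspose_diagonal_ofReal,
      Matrix.mul_assoc]

lemma exists_isSVD (x : Matrix ι ι ℂ) : ∃ U V s, IsSVD x U V s := by
  have hpos := posSemidef_conjTranspose_mul_self x
  let lam := hpos.isHermitian.eigenvalues
  let V := hpos.isHermitian.eigenvectorUnitary
  have hV : (V : Matrix ι ι ℂ)ᴴ * (xᴴ * x) * V = diagonal fun i => (lam i : ℂ) := by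
    have h := hpos.isHermitian.conjStarAlgAut_star_eigenvectorUnitary
    rw [Unitary.conjStarAlgAut_star_apply] at h
    exact h
  have hxV : (x * (V : Matrix ι ι ℂ))ᴴ * (x * V) = diagonal fun i => (√(lam i) : ℂ) ^ 2 := by
    rw [conjTranspose_mul, Matrix.mul_assoc, ← Matrix.mul_assoc xᴴ, ← Matrix.mul_assoc, hV]
    refine congrArg diagonal (funext fun i => ?_)
    rw [← Complex.ofReal_pow, Real.sq_sqrt (hpos.eigenvalues_nonneg i)]
  obtain ⟨U, hU⟩ := exists_unitary_eq_mul_diagonal hxV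
  exact ⟨U, V, _, fun i => Real.sqrt_nonneg _, by
    rw [← hU, Matrix.mul_assoc, unitaryGroup_mul_conjTranspose_self, Matrix.mul_one]⟩

lemma sum_eigenvalues_eq_of_unitary_diagonalization {A : Matrix ι ι ℂ} (hA : A.IsHermitian)
    {V : unitaryGroup ι ℂ} {d : ι → ℝ}
    (h : A = V * diagonal (fun i => (d i : ℂ)) * (V : Matrix ι ι ℂ)ᴴ) (f : ℝ → ℝ) :
    ∑ i, f (hA.eigenvalues i) = ∑ i, f (d i) := by
  have hchar : A.charpoly = (diagonal fun i => (d i : ℂ)).charpoly := by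
    rw [h, charpoly_mul_comm, ← Matrix.mul_assoc, unitaryGroup_conjTranspose_mul_self,
      Matrix.one_mul]
  have hroots : A.charpoly.roots = Multiset.map (fun i => (d i : ℂ)) Finset.univ.val := by
    rw [hchar, charpoly_diagonal]
    exact Polynomial.roots_multiset_prod_X_sub_C (Multiset.map (fun i => (d i : ℂ)) _) ▸ by simp
  rw [hA.roots_charpoly_eq_eigenvalues] at hroots
  simpa using congrArg (fun m => (m.map fun z : ℂ => f z.re).sum) hroots

end SingularValues

section SchattenNorm

variable {ι : Type} [Fintype ι] [DecidableEq ι]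

lemma IsSVD.schattenNorm_eq {x : Matrix ι ι ℂ} {U V : unitaryGroup ι ℂ} {s : ι → ℝ}
    (h : IsSVD x U V s) {p : ℝ≥0∞} (hp : p ≠ 0) :
    schattenNorm p x = ‖WithLp.toLp p s‖ := by
  rw [schattenNorm]
  split_ifs with hpt
  · subst hpt
    have hx : opNorm x = ‖x‖ := rfl
    rw [hx, h.eq, norm_unitary_mul_diagonal_mul_conjTranspose, PiLp.norm_toLp]
    simp [Pi.norm_def]
  · have hx : xᴴ * x = V * diagonal (fun i => ((s i ^ 2 : ℝ) : ℂ)) * (V : Matrix ι ι ℂ)ᴴ := by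
      simp only [h.eq, conjTranspose_mul, conjTranspose_conjTranspose,
        conjTranspose_diagonal_ofReal, Matrix.mul_assoc]
      rw [← Matrix.mul_assoc (U : Matrix ι ι ℂ)ᴴ, unitaryGroup_conjTranspose_mul_self,
        Matrix.one_mul, ← Matrix.mul_assoc (diagonal _), diagonal_mul_diagonal]
      simp [pow_two]
    rw [PiLp.norm_eq_sum (ENNReal.toReal_pos hp hpt),
      sum_eigenvalues_eq_of_unitary_diagonalization _ hx fun t => √t ^ p.toReal]
    simp [Real.sqrt_sq_eq_abs]

lemma schattenNorm_conjTranspose {p : ℝ≥0∞} (hp : p ≠ 0) (x : Matrix ι ι ℂ) :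
    schattenNorm p xᴴ = schattenNorm p x := by
  obtain ⟨U, V, s, h⟩ := exists_isSVD x
  rw [h.schattenNorm_eq hp, h.conjTranspose.schattenNorm_eq hp]

lemma schattenNorm_nonneg (p : ℝ≥0∞) (x : Matrix ι ι ℂ) :
    0 ≤ schattenNorm p x := by
  rw [schattenNorm]
  split_ifs
  · exact norm_nonneg _
  · exact Real.rpow_nonneg (Finset.sum_nonneg fun i _ => Real.rpow_nonneg (Real.sqrt_nonneg _) _) _

lemma schattenNorm_zero {p : ℝ≥0∞} (hp : p ≠ 0) :
    schattenNorm p (0 : Matrix ι ι ℂ) = 0 := by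
  have h : IsSVD (0 : Matrix ι ι ℂ) 1 1 0 := ⟨fun _ => le_rfl, by simp⟩
  rw [h.schattenNorm_eq hp, WithLp.toLp_zero]
  rcases p.trichotomy with rfl | rfl | hpos
  · exact absurd rfl hp
  · simp
  · simp [PiLp.norm_eq_sum hpos, hpos.ne']

lemma norm_le_schattenNorm {p : ℝ≥0∞} (hp : 1 ≤ p)
    (x : Matrix ι ι ℂ) : ‖x‖ ≤ schattenNorm p x := by
  obtain ⟨U, V, s, h⟩ := exists_isSVD x
  have : Fact (1 ≤ p) := ⟨hp⟩
  rw [h.schattenNorm_eq (zero_lt_one.trans_le hp).ne', h.eq,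
    norm_unitary_mul_diagonal_mul_conjTranspose, pi_norm_le_iff_of_nonneg (norm_nonneg _)]
  intro i
  rw [Complex.norm_real]
  exact PiLp.norm_apply_le (WithLp.toLp p s) i

end SchattenNorm

section Weights

variable {ι : Type*} [Fintype ι] {p : ℝ≥0∞} {s d : ι → ℝ}

lemma toReal_inv_le_one (hp : 1 ≤ p) : (p⁻¹).toReal ≤ 1 :=
  ENNReal.toReal_le_of_le_ofReal zero_le_one (by simpa using hp)

lemma toReal_inv_two_mul (p : ℝ≥0∞) : ((2 * p)⁻¹).toReal = (p⁻¹).toReal / 2 := by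
  rw [ENNReal.toReal_inv, ENNReal.toReal_mul, ENNReal.toReal_inv, mul_inv, ENNReal.toReal_ofNat,
    inv_mul_eq_div]

lemma norm_toLp_rpow_le_one (hp : p ≠ 0) (hd : ∀ i, 0 ≤ d i) (hsum : ∑ i, d i ≤ 1) :
    ‖WithLp.toLp p fun i => d i ^ (p⁻¹).toReal‖ ≤ 1 := by
  rcases eq_or_ne p ∞ with rfl | hpt
  · rw [PiLp.norm_toLp, pi_norm_le_iff_of_nonneg zero_le_one]
    simp
  · have hpow (i : ι) : ‖d i ^ (p⁻¹).toReal‖ ^ p.toReal = d i := by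
      rw [Real.norm_of_nonneg (Real.rpow_nonneg (hd i) _), ENNReal.toReal_inv,
        Real.rpow_inv_rpow (hd i) (ENNReal.toReal_pos hp hpt).ne']
    rw [PiLp.norm_eq_sum (ENNReal.toReal_pos hp hpt)]
    simp only [hpow]
    exact Real.rpow_le_one (Finset.sum_nonneg fun i _ => hd i) hsum (by positivity)

lemma exists_weights_top (hs : ∀ i, 0 ≤ s i) :
    ∃ d : ι → ℝ, (∀ i, 0 ≤ d i) ∧ ∑ i, d i ≤ 1 ∧ (∀ i, s i ≤ ‖WithLp.toLp ∞ s‖) ∧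
      ‖WithLp.toLp ∞ s‖ ≤ ∑ i, s i * d i := by
  have hle (i : ι) : s i ≤ ‖WithLp.toLp ∞ s‖ :=
    (le_abs_self _).trans (PiLp.norm_apply_le (WithLp.toLp ∞ s) i)
  rcases isEmpty_or_nonempty ι with hι | hι
  · exact ⟨0, by simp, by simp, hle, by simp [PiLp.norm_eq_ciSup]⟩
  · obtain ⟨i₀, hi₀⟩ := exists_eq_ciSup_of_finite (f := fun i => ‖s i‖)
    have hnorm : ‖WithLp.toLp ∞ s‖ = s i₀ := by
      rw [PiLp.norm_eq_ciSup, ← Real.norm_of_nonneg (hs i₀), hi₀]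
    exact ⟨Pi.single i₀ 1, (Pi.single_nonneg.2 zero_le_one : (0 : ι → ℝ) ≤ _), by simp, hle,
      by simp [hnorm, Pi.single_apply]⟩

/-- The weights `sᵢᵖ / ‖s‖ᵖ` give equality in both bounds. -/
lemma exists_weights_of_ne_top (hp : 1 ≤ p) (hpt : p ≠ ∞) (hs : ∀ i, 0 ≤ s i) :
    ∃ d : ι → ℝ, (∀ i, 0 ≤ d i) ∧ ∑ i, d i ≤ 1 ∧
      (∀ i, s i ≤ ‖WithLp.toLp p s‖ * d i ^ (p⁻¹).toReal) ∧
      ‖WithLp.toLp p s‖ ≤ ∑ i, s i * d i ^ (1 - (p⁻¹).toReal) := by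
  have hP := ENNReal.toReal_pos (zero_lt_one.trans_le hp).ne' hpt
  have : Fact (1 ≤ p) := ⟨hp⟩
  set M := ‖WithLp.toLp p s‖ with hMdef
  have hM0 : 0 ≤ M := norm_nonneg _
  have hM : M ^ p.toReal = ∑ i, s i ^ p.toReal := by
    simp only [hMdef, PiLp.norm_eq_sum hP, Real.norm_of_nonneg (hs _), one_div]
    exact Real.rpow_inv_rpow (Finset.sum_nonneg fun i _ => Real.rpow_nonneg (hs i) _) hP.ne'
  have hd (i : ι) : 0 ≤ (s i / M) ^ p.toReal := Real.rpow_nonneg (div_nonneg (hs i) hM0) _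
  have hsum : ∑ i, (s i / M) ^ p.toReal = M ^ p.toReal / M ^ p.toReal := by
    simp only [Real.div_rpow (hs _) hM0, ← Finset.sum_div, ← hM]
  have heq (i : ι) : s i = M * ((s i / M) ^ p.toReal) ^ (p⁻¹).toReal := by
    rw [ENNReal.toReal_inv, Real.rpow_rpow_inv (div_nonneg (hs i) hM0) hP.ne',
      mul_div_cancel_of_imp']
    intro h0
    have hle : |s i| ≤ M := PiLp.norm_apply_le (WithLp.toLp p s) i
    exact abs_nonpos_iff.1 (h0 ▸ hle)
  refine ⟨_, hd, hsum.trans_le (div_self_le_one _), fun i => (heq i).le, ?_⟩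
  have hterm (i : ι) : s i * ((s i / M) ^ p.toReal) ^ (1 - (p⁻¹).toReal) =
      M * (s i / M) ^ p.toReal := by
    nth_rw 1 [heq i]
    rw [mul_assoc, ← Real.rpow_add_of_nonneg (hd i) ENNReal.toReal_nonneg
      (sub_nonneg.2 (toReal_inv_le_one hp)), add_sub_cancel, Real.rpow_one]
  rw [Finset.sum_congr rfl fun i _ => hterm i, ← Finset.mul_sum, hsum]
  rcases hM0.eq_or_lt with h0 | h0
  · simp [← h0]
  · rw [div_self (Real.rpow_pos_of_pos h0 _).ne', mul_one]

lemma exists_weights (hp : 1 ≤ p) (hs : ∀ i, 0 ≤ s i) :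
    ∃ d : ι → ℝ, (∀ i, 0 ≤ d i) ∧ ∑ i, d i ≤ 1 ∧
      (∀ i, s i ≤ ‖WithLp.toLp p s‖ * d i ^ (p⁻¹).toReal) ∧
      ‖WithLp.toLp p s‖ ≤ ∑ i, s i * d i ^ (1 - (p⁻¹).toReal) := by
  rcases eq_or_ne p ∞ with rfl | hpt
  · simpa using exists_weights_top hs
  · exact exists_weights_of_ne_top hp hpt hs

lemma mix_uniform_pos (hd : ∀ i, 0 ≤ d i) {t : ℝ} (ht0 : 0 < t) (ht1 : t ≤ 1) (i : ι) :
    0 < (1 - t) * d i + t * (Fintype.card ι : ℝ)⁻¹ :=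
  have : Nonempty ι := ⟨i⟩
  add_pos_of_nonneg_of_pos (mul_nonneg (sub_nonneg.2 ht1) (hd i)) (by positivity)

lemma sum_mix_uniform_le_one (hsum : ∑ i, d i ≤ 1) {t : ℝ} (ht0 : 0 ≤ t) (ht1 : t ≤ 1) :
    ∑ i, ((1 - t) * d i + t * (Fintype.card ι : ℝ)⁻¹) ≤ 1 := by
  have hcard : (Fintype.card ι : ℝ) * (Fintype.card ι : ℝ)⁻¹ ≤ 1 := mul_inv_le_one
  rw [Finset.sum_add_distrib, ← Finset.mul_sum, Finset.sum_const, Finset.card_univ, nsmul_eq_mul,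
    mul_left_comm]
  nlinarith

lemma exists_pos_weights_le (hp : 1 ≤ p) (hs : ∀ i, 0 ≤ s i) {r : ℝ}
    (hr : ‖WithLp.toLp p s‖ < r) :
    ∃ d : ι → ℝ, (∀ i, 0 < d i) ∧ ∑ i, d i ≤ 1 ∧ ∀ i, s i ≤ r * d i ^ (p⁻¹).toReal := by
  obtain ⟨d, hd, hsum, hle, -⟩ := exists_weights hp hs
  have : Fact (1 ≤ p) := ⟨hp⟩
  set M := ‖WithLp.toLp p s‖
  have hM : 0 ≤ M := norm_nonneg _
  have hr0 : 0 < r := hM.trans_lt hr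
  have ht0 : 0 < 1 - M / r := sub_pos.2 ((div_lt_one hr0).2 hr)
  have ht1 : 1 - M / r ≤ 1 := sub_le_self _ (by positivity)
  refine ⟨_, mix_uniform_pos hd ht0 ht1, sum_mix_uniform_le_one hsum ht0.le ht1,
    fun i => (hle i).trans ?_⟩
  calc M * d i ^ (p⁻¹).toReal = r * ((M / r) * d i ^ (p⁻¹).toReal) := by field_simp
    _ ≤ r * ((M / r) ^ (p⁻¹).toReal * d i ^ (p⁻¹).toReal) := by
        gcongr
        · exact Real.rpow_nonneg (hd i) _
        · exact Real.self_le_rpow_of_le_one (by positivity) ((div_lt_one hr0).2 hr).le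
            (toReal_inv_le_one hp)
    _ = r * (M / r * d i) ^ (p⁻¹).toReal := by rw [Real.mul_rpow (by positivity) (hd i)]
    _ ≤ r * ((1 - (1 - M / r)) * d i + (1 - M / r) * (Fintype.card ι : ℝ)⁻¹) ^ (p⁻¹).toReal := by
        gcongr
        · exact mul_nonneg (by positivity) (hd i)
        · rw [sub_sub_cancel]
          exact le_add_of_nonneg_right (by positivity)

lemma exists_pos_weights_lt_sum (hp : 1 ≤ p) (hs : ∀ i, 0 ≤ s i) {r : ℝ}
    (hr : r < ‖WithLp.toLp p s‖) :
    ∃ d : ι → ℝ, (∀ i, 0 < d i) ∧ ∑ i, d i ≤ 1 ∧ r < ∑ i, s i * d i ^ (1 - (p⁻¹).toReal) := by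
  obtain ⟨d, hd, hsum, -, hle⟩ := exists_weights hp hs
  have hcont : Continuous fun t : ℝ =>
      ∑ i, s i * ((1 - t) * d i + t * (Fintype.card ι : ℝ)⁻¹) ^ (1 - (p⁻¹).toReal) :=
    continuous_finsetSum _ fun i _ => continuous_const.mul <|
      Continuous.rpow_const (by fun_prop) fun _ => Or.inr (sub_nonneg.2 (toReal_inv_le_one hp))
  have hnear := (hcont.tendsto 0).eventually_const_lt (by simpa using hr.trans_le hle)
  obtain ⟨t, ht, ht0, ht1⟩ :=
    ((hnear.filter_mono nhdsWithin_le_nhds).and (Ioc_mem_nhdsGT zero_lt_one)).exists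
  exact ⟨_, mix_uniform_pos hd ht0 ht1, sum_mix_uniform_le_one hsum ht0.le ht1, ht⟩

end Weights

section PartialTrace

variable {ι κ ρ σ : Type*} [Fintype κ]

/-- The partial trace `id ⊗ tr : M_ι ⊗ M_κ → M_ι`. -/
def partialTrace (A : Matrix (ι × κ) (ι × κ) ℂ) : Matrix ι ι ℂ :=
  of fun i j => ∑ k, A (i, k) (j, k)

lemma partialTrace_eq_sum_submatrix (A : Matrix (ι × κ) (ι × κ) ℂ) :
    partialTrace A = ∑ k, A.submatrix (·, k) (·, k) := by
  ext i j
  simp [partialTrace, Matrix.sum_apply]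

lemma posDef_partialTrace [Nonempty κ] {A : Matrix (ι × κ) (ι × κ) ℂ} (hA : A.PosDef) :
    (partialTrace A).PosDef := by
  rw [partialTrace_eq_sum_submatrix]
  exact posDef_sum Finset.univ_nonempty fun k _ => hA.submatrix (Prod.mk_left_injective k)

variable [Fintype ι]

lemma trace_partialTrace (A : Matrix (ι × κ) (ι × κ) ℂ) : (partialTrace A).trace = A.trace := by
  simp [partialTrace, trace, Fintype.sum_prod_type]

variable [DecidableEq κ]

lemma kronecker_one_mul_apply (a : Matrix σ ι ℂ) (A : Matrix (ι × κ) ρ ℂ) (i : σ) (k : κ) (r : ρ) :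
    ((a ⊗ₖ (1 : Matrix κ κ ℂ)) * A) (i, k) r = ∑ j, a i j * A (j, k) r := by
  simp [mul_apply, Fintype.sum_prod_type, one_apply]

lemma mul_kronecker_one_apply (b : Matrix ι σ ℂ) (A : Matrix ρ (ι × κ) ℂ) (r : ρ) (j : σ) (k : κ) :
    (A * (b ⊗ₖ (1 : Matrix κ κ ℂ))) r (j, k) = ∑ i, A r (i, k) * b i j := by
  simp [mul_apply, Fintype.sum_prod_type, one_apply]

lemma partialTrace_kronecker_one_mul (a : Matrix ι ι ℂ) (A : Matrix (ι × κ) (ι × κ) ℂ) :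
    partialTrace ((a ⊗ₖ (1 : Matrix κ κ ℂ)) * A) = a * partialTrace A := by
  ext i j
  simp only [partialTrace, of_apply, kronecker_one_mul_apply]
  simp only [mul_apply, of_apply, Finset.mul_sum]
  exact Finset.sum_comm

lemma partialTrace_mul_kronecker_one (A : Matrix (ι × κ) (ι × κ) ℂ) (b : Matrix ι ι ℂ) :
    partialTrace (A * (b ⊗ₖ (1 : Matrix κ κ ℂ))) = partialTrace A * b := by
  ext i j
  simp only [partialTrace, of_apply, mul_kronecker_one_apply]
  simp only [mul_apply, of_apply, Finset.sum_mul]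
  exact Finset.sum_comm

end PartialTrace

lemma differentiable_matrix_iff {ι κ : Type*} [Finite ι] [Finite κ] {F : ℂ → Matrix ι κ ℂ} :
    Differentiable ℂ F ↔ ∀ i j, Differentiable ℂ fun z => F z i j := by
  have := Fintype.ofFinite ι
  have := Fintype.ofFinite κ
  exact differentiable_pi.trans (forall_congr' fun _ => differentiable_pi)

/-- A positive definite matrix of trace at most `1`, recorded through a spectral decomposition
`basis * diagonal weight * basisᴴ`. -/
structure Density (ι : Type*) [Fintype ι] [DecidableEq ι] where
  basis : unitaryGroup ι ℂ
  weight : ι → ℝ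
  weight_pos : ∀ i, 0 < weight i
  sum_weight_le_one : ∑ i, weight i ≤ 1

namespace Density

section Pow

variable {ι : Type*} [Fintype ι] [DecidableEq ι] (D : Density ι) {z : ℂ}

/-- The complex power `D ^ z` of the positive definite matrix `D`. -/
def pow (z : ℂ) : Matrix ι ι ℂ :=
  D.basis * diagonal (fun i => (D.weight i : ℂ) ^ z) * (D.basis : Matrix ι ι ℂ)ᴴ

lemma ofReal_weight_ne_zero (i : ι) : (D.weight i : ℂ) ≠ 0 :=
  Complex.ofReal_ne_zero.2 (D.weight_pos i).ne'

lemma weight_le_one (i : ι) : D.weight i ≤ 1 :=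
  (Finset.single_le_sum (fun j _ => (D.weight_pos j).le) (Finset.mem_univ i)).trans
    D.sum_weight_le_one

lemma pow_zero : D.pow 0 = 1 := by
  simp [pow, unitaryGroup_mul_conjTranspose_self]

lemma pow_add (z w : ℂ) : D.pow (z + w) = D.pow z * D.pow w := by
  simp only [pow, Matrix.mul_assoc]
  rw [← Matrix.mul_assoc (D.basis : Matrix ι ι ℂ)ᴴ, unitaryGroup_conjTranspose_mul_self,
    Matrix.one_mul, ← Matrix.mul_assoc (diagonal _), diagonal_mul_diagonal]
  simp only [Complex.cpow_add _ _ (D.ofReal_weight_ne_zero _)]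

lemma conjTranspose_pow (z : ℂ) : (D.pow z)ᴴ = D.pow (star z) := by
  have hconj (i : ι) : star ((D.weight i : ℂ) ^ z) = (D.weight i : ℂ) ^ star z := by
    have harg : (D.weight i : ℂ).arg ≠ Real.pi := by
      rw [Complex.arg_ofReal_of_nonneg (D.weight_pos i).le]
      exact Real.pi_pos.ne
    rw [Complex.star_def, Complex.cpow_conj _ _ harg, Complex.conj_ofReal]
  simp only [pow, conjTranspose_mul, conjTranspose_conjTranspose, diagonal_conjTranspose,
    Matrix.mul_assoc, Pi.star_def, hconj]

lemma norm_pow_le_one (hz : 0 ≤ z.re) : ‖D.pow z‖ ≤ 1 := by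
  rw [pow, norm_unitary_mul_diagonal_mul_conjTranspose, pi_norm_le_iff_of_nonneg zero_le_one]
  intro i
  rw [Complex.norm_cpow_eq_rpow_re_of_pos (D.weight_pos i)]
  exact Real.rpow_le_one (D.weight_pos i).le (D.weight_le_one i) hz

lemma differentiable_pow : Differentiable ℂ D.pow := by
  refine ((differentiable_const _).mul (differentiable_matrix_iff.2 fun i j => ?_)).mul
    (differentiable_const _)
  rcases eq_or_ne i j with rfl | hij
  · simp only [diagonal_apply_eq]
    exact differentiable_id.const_cpow (.inl (D.ofReal_weight_ne_zero i))
  · simp [diagonal_apply_ne _ hij]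

lemma differentiable_pow_half : Differentiable ℂ fun z => D.pow (z / 2) :=
  D.differentiable_pow.comp (f := fun z : ℂ => z / 2) (by fun_prop)

lemma posDef_pow_one : (D.pow 1).PosDef := by
  have hdiag : (diagonal fun i => (D.weight i : ℂ) ^ (1 : ℂ)).PosDef := by
    simpa [posDef_diagonal_iff] using D.weight_pos
  refine hdiag.mul_mul_conjTranspose_same (vecMul_injective_of_isUnit ?_)
  exact (Unitary.toUnits D.basis).isUnit

lemma trace_pow_one : (D.pow 1).trace = ((∑ i, D.weight i : ℝ) : ℂ) := by
  rw [pow, trace_mul_comm, ← Matrix.mul_assoc, unitaryGroup_conjTranspose_mul_self, Matrix.one_mul,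
    trace_diagonal]
  simp

lemma isSVD_pow (t : ℝ) : IsSVD (D.pow t) D.basis D.basis fun i => D.weight i ^ t where
  nonneg i := Real.rpow_nonneg (D.weight_pos i).le t
  eq := by simp only [pow, Complex.ofReal_cpow (D.weight_pos _).le]

end Pow

lemma schattenNorm_pow_le_one {ι : Type} [Fintype ι] [DecidableEq ι] (D : Density ι) {p : ℝ≥0∞}
    (hp : p ≠ 0) : schattenNorm p (D.pow (p⁻¹).toReal) ≤ 1 := by
  rw [(D.isSVD_pow _).schattenNorm_eq hp]
  exact norm_toLp_rpow_le_one hp (fun i => (D.weight_pos i).le) D.sum_weight_le_one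

lemma exists_pow_one_eq {ι : Type*} [Fintype ι] [DecidableEq ι] {A : Matrix ι ι ℂ} (hA : A.PosDef)
    (htr : A.trace.re ≤ 1) : ∃ D : Density ι, D.pow 1 = A := by
  refine ⟨⟨hA.isHermitian.eigenvectorUnitary, hA.isHermitian.eigenvalues, hA.eigenvalues_pos, ?_⟩,
    ?_⟩
  · simpa [hA.isHermitian.trace_eq_sum_eigenvalues] using htr
  · have h := hA.isHermitian.spectral_theorem
    rw [Unitary.conjStarAlgAut_apply] at h
    simp only [pow, Complex.cpow_one]
    exact h.symm

section Rescaled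

variable {ι κ : Type*} [Fintype ι] [Fintype κ] [DecidableEq ι] [DecidableEq κ] [Nonempty κ]
  (D : Density (ι × κ)) {z : ℂ}

lemma exists_pow_one_eq_partialTrace : ∃ M : Density ι, M.pow 1 = partialTrace (D.pow 1) :=
  exists_pow_one_eq (posDef_partialTrace D.posDef_pow_one) <| by
    rw [trace_partialTrace, trace_pow_one, Complex.ofReal_re]
    exact D.sum_weight_le_one

/-- The marginal `(id ⊗ tr) D` on the first tensor factor. -/
def marginal : Density ι :=
  D.exists_pow_one_eq_partialTrace.choose

lemma marginal_pow_one : D.marginal.pow 1 = partialTrace (D.pow 1) :=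
  D.exists_pow_one_eq_partialTrace.choose_spec

/-- The analytic family `(marginal ^ (-z/2) ⊗ 1) * D ^ (z/2)`. -/
def rescaled (z : ℂ) : Matrix (ι × κ) (ι × κ) ℂ :=
  (D.marginal.pow (-(z / 2)) ⊗ₖ (1 : Matrix κ κ ℂ)) * D.pow (z / 2)

lemma rescaled_eq_mul (z : ℂ) : (D.marginal.pow (z / 2) ⊗ₖ (1 : Matrix κ κ ℂ)) * D.rescaled z =
    D.pow (z / 2) := by
  rw [rescaled, ← Matrix.mul_assoc, ← mul_kronecker_mul, ← pow_add, add_neg_cancel, pow_zero,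
    Matrix.one_mul, one_kronecker_one, Matrix.one_mul]

lemma conjTranspose_rescaled_star (z : ℂ) : (D.rescaled (star z))ᴴ =
    D.pow (z / 2) * (D.marginal.pow (-(z / 2)) ⊗ₖ (1 : Matrix κ κ ℂ)) := by
  simp [rescaled, conjTranspose_mul, conjTranspose_kronecker, conjTranspose_pow]

lemma differentiable_marginal_pow_kronecker_one : Differentiable ℂ fun z =>
    D.marginal.pow (-(z / 2)) ⊗ₖ (1 : Matrix κ κ ℂ) := by
  have h := D.marginal.differentiable_pow.comp (f := fun z : ℂ => -(z / 2)) (by fun_prop)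
  refine differentiable_matrix_iff.2 fun i j => ?_
  exact (differentiable_matrix_iff.1 h i.1 j.1).mul_const _

lemma differentiable_rescaled : Differentiable ℂ D.rescaled :=
  D.differentiable_marginal_pow_kronecker_one.mul D.differentiable_pow_half

lemma differentiable_conjTranspose_rescaled_star : Differentiable ℂ fun z =>
    (D.rescaled (star z))ᴴ := by
  simp only [conjTranspose_rescaled_star]
  exact D.differentiable_pow_half.mul D.differentiable_marginal_pow_kronecker_one

lemma norm_rescaled_le (hz : 0 ≤ z.re) : ‖D.rescaled z‖ ≤ ‖D.marginal.pow (-(z / 2))‖ := by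
  have hpow : ‖D.pow (z / 2)‖ ≤ 1 := D.norm_pow_le_one (by simpa using div_nonneg hz zero_le_two)
  calc ‖D.rescaled z‖ ≤ ‖D.marginal.pow (-(z / 2)) ⊗ₖ (1 : Matrix κ κ ℂ)‖ * ‖D.pow (z / 2)‖ :=
        l2_opNorm_mul _ _
    _ ≤ ‖D.marginal.pow (-(z / 2))‖ * 1 := by
        gcongr
        exact l2_opNorm_kronecker_one_le _
    _ = ‖D.marginal.pow (-(z / 2))‖ := mul_one _

lemma norm_rescaled_le_one (hz : z.re = 0) : ‖D.rescaled z‖ ≤ 1 :=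
  (D.norm_rescaled_le hz.ge).trans (D.marginal.norm_pow_le_one (by simp [hz]))

lemma norm_rescaled_le_of_mem_strip (hz : z.re ∈ Set.Icc (0 : ℝ) 1) :
    ‖D.rescaled z‖ ≤ ‖D.marginal.pow (-(1 / 2))‖ := by
  have hsplit : -(z / 2) = -(1 / 2) + (1 - z) / 2 := by ring
  have hpow : ‖D.marginal.pow ((1 - z) / 2)‖ ≤ 1 :=
    D.marginal.norm_pow_le_one (by simpa using div_nonneg (sub_nonneg.2 hz.2) zero_le_two)
  calc ‖D.rescaled z‖ ≤ ‖D.marginal.pow (-(z / 2))‖ := D.norm_rescaled_le hz.1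
    _ ≤ ‖D.marginal.pow (-(1 / 2))‖ * ‖D.marginal.pow ((1 - z) / 2)‖ := by
        rw [hsplit, pow_add]
        exact l2_opNorm_mul _ _
    _ ≤ ‖D.marginal.pow (-(1 / 2))‖ := mul_le_of_le_one_right (norm_nonneg _) hpow

lemma partialTrace_rescaled_mul_conjTranspose (hz : z.re = 1) :
    partialTrace (D.rescaled z * (D.rescaled z)ᴴ) = 1 := by
  have hstar : z / 2 + star z / 2 = 1 := by
    rw [← add_div, ← starRingEnd_apply, Complex.add_conj, hz]
    simp
  have hrescaled := D.conjTranspose_rescaled_star (star z)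
  rw [star_star] at hrescaled
  rw [hrescaled, rescaled, Matrix.mul_assoc, partialTrace_kronecker_one_mul, ← Matrix.mul_assoc,
    ← pow_add, partialTrace_mul_kronecker_one, hstar, ← marginal_pow_one, ← pow_add, ← pow_add,
    ← hstar, add_neg_cancel_right, neg_add_cancel, pow_zero]

end Rescaled

end Density

section Contraction

variable {ι κ μ ρ σ : Type*} [Fintype κ]

/-- The contraction of `y` and `w` over their common tensor factor `M_κ`: the matrix
`∑ tr(y₂ w₂) • (y₁ ⊗ w₁ᵀ)` when `y = ∑ y₁ ⊗ y₂` and `w = ∑ w₁ ⊗ w₂`. -/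
def contract (y : Matrix (ι × κ) (ι × κ) ℂ) (w : Matrix (μ × κ) (μ × κ) ℂ) :
    Matrix (ι × μ) (ι × μ) ℂ :=
  of fun a b => ∑ k, ∑ l, y (a.1, k) (b.1, l) * w (b.2, l) (a.2, k)

lemma contract_comm (y : Matrix (ι × κ) (ι × κ) ℂ) (w : Matrix (μ × κ) (μ × κ) ℂ) :
    contract y w =
      (contract w y)ᵀ.submatrix (Equiv.prodComm ι μ) (Equiv.prodComm ι μ) := by
  ext a b
  simp only [contract, of_apply, transpose_apply, submatrix_apply, Equiv.prodComm_apply,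
    Prod.fst_swap, Prod.snd_swap, mul_comm (w _ _)]
  exact Finset.sum_comm

section Covariance

variable [Fintype ι] [Fintype μ] [DecidableEq κ]

lemma contract_kronecker_one_mul [DecidableEq μ] (a : Matrix ι ι ℂ) (y : Matrix (ι × κ) (ι × κ) ℂ)
    (w : Matrix (μ × κ) (μ × κ) ℂ) :
    contract ((a ⊗ₖ (1 : Matrix κ κ ℂ)) * y) w = (a ⊗ₖ (1 : Matrix μ μ ℂ)) * contract y w := by
  ext ⟨i, i'⟩ ⟨j, j'⟩
  simp only [contract, of_apply, kronecker_one_mul_apply, Finset.sum_mul, Finset.mul_sum, mul_assoc]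
  rw [eq_comm, Finset.sum_comm]
  exact Finset.sum_congr rfl fun k _ => Finset.sum_comm

lemma contract_mul_kronecker_one [DecidableEq μ] (b : Matrix ι ι ℂ) (y : Matrix (ι × κ) (ι × κ) ℂ)
    (w : Matrix (μ × κ) (μ × κ) ℂ) :
    contract (y * (b ⊗ₖ (1 : Matrix κ κ ℂ))) w = contract y w * (b ⊗ₖ (1 : Matrix μ μ ℂ)) := by
  ext ⟨i, i'⟩ ⟨j, j'⟩
  simp only [contract, of_apply, mul_kronecker_one_apply, Finset.sum_mul,
    mul_right_comm _ (b _ _)]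
  rw [eq_comm, Finset.sum_comm]
  exact Finset.sum_congr rfl fun k _ => Finset.sum_comm

lemma contract_kronecker_one_mul_right [DecidableEq ι] (y : Matrix (ι × κ) (ι × κ) ℂ)
    (α : Matrix μ μ ℂ) (w : Matrix (μ × κ) (μ × κ) ℂ) :
    contract y ((α ⊗ₖ (1 : Matrix κ κ ℂ)) * w) = contract y w * ((1 : Matrix ι ι ℂ) ⊗ₖ αᵀ) := by
  rw [contract_comm, contract_kronecker_one_mul, transpose_mul,
    ← submatrix_mul_equiv _ _ _ (Equiv.prodComm ι μ), ← contract_comm, ← kroneckerMap_transpose,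
    transpose_one, submatrix_prodComm_kronecker]

lemma contract_mul_kronecker_one_right [DecidableEq ι] (y : Matrix (ι × κ) (ι × κ) ℂ)
    (β : Matrix μ μ ℂ) (w : Matrix (μ × κ) (μ × κ) ℂ) :
    contract y (w * (β ⊗ₖ (1 : Matrix κ κ ℂ))) = ((1 : Matrix ι ι ℂ) ⊗ₖ βᵀ) * contract y w := by
  rw [contract_comm, contract_mul_kronecker_one, transpose_mul,
    ← submatrix_mul_equiv _ _ _ (Equiv.prodComm ι μ), ← contract_comm, ← kroneckerMap_transpose,
    transpose_one, submatrix_prodComm_kronecker]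

end Covariance

section BlockRow

/-- The block row `[A₁ ⋯ A_κ]` of the matrices `A_k = A (·, k) ·`. -/
def blockRow (A : Matrix (ι × κ) ρ ℂ) : Matrix ι (κ × ρ) ℂ :=
  of fun i kr => A (i, kr.1) kr.2

variable [Fintype ρ]

lemma blockRow_mul_conjTranspose (A : Matrix (ι × κ) ρ ℂ) :
    blockRow A * (blockRow A)ᴴ = partialTrace (A * Aᴴ) := by
  ext i j
  simp [blockRow, partialTrace, mul_apply, Fintype.sum_prod_type]

variable [Fintype σ] [Fintype μ] [DecidableEq μ]

lemma contract_mul_conjTranspose (A : Matrix (ι × κ) ρ ℂ) (T : Matrix ρ σ ℂ)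
    (B : Matrix (ι × κ) σ ℂ) (w : Matrix (μ × κ) (μ × κ) ℂ) :
    contract (A * T * Bᴴ) w = (blockRow A ⊗ₖ (1 : Matrix μ μ ℂ)) *
      (wᵀ ⊗ₖ T).submatrix ((Equiv.prodComm (κ × ρ) μ).trans (Equiv.prodAssoc μ κ ρ).symm)
        ((Equiv.prodComm (κ × σ) μ).trans (Equiv.prodAssoc μ κ σ).symm) *
      ((blockRow B)ᴴ ⊗ₖ (1 : Matrix μ μ ℂ)) := by
  ext ⟨i, i'⟩ ⟨j, j'⟩
  simp only [mul_kronecker_one_apply, kronecker_one_mul_apply]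
  simp only [contract, of_apply, mul_apply, Finset.sum_mul, Fintype.sum_prod_type, blockRow,
    conjTranspose_apply, submatrix_apply, kroneckerMap_apply, transpose_apply, Equiv.trans_apply,
    Equiv.prodComm_apply, Prod.swap_prod_mk, Equiv.prodAssoc_symm_apply]
  rw [Finset.sum_comm]
  refine Finset.sum_congr rfl fun l _ => Finset.sum_comm.trans ?_
  refine Finset.sum_congr rfl fun s _ => Finset.sum_congr rfl fun k _ =>
    Finset.sum_congr rfl fun r _ => ?_
  ring

variable [Fintype ι] [DecidableEq ι]

lemma norm_contract_comm_le (y : Matrix (ι × κ) (ι × κ) ℂ) (w : Matrix (μ × κ) (μ × κ) ℂ) :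
    ‖contract y w‖ ≤ ‖contract w y‖ := by
  rw [contract_comm]
  exact (l2_opNorm_submatrix_equiv_le _ _ _).trans (l2_opNorm_transpose_le _)

variable [DecidableEq κ] [DecidableEq ρ] [DecidableEq σ]

lemma norm_contract_mul_conjTranspose_le (A : Matrix (ι × κ) ρ ℂ) (T : Matrix ρ σ ℂ)
    (B : Matrix (ι × κ) σ ℂ) (w : Matrix (μ × κ) (μ × κ) ℂ) :
    ‖contract (A * T * Bᴴ) w‖ ≤ ‖blockRow A‖ * (‖w‖ * ‖T‖) * ‖blockRow B‖ := by
  rw [contract_mul_conjTranspose]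
  refine (l2_opNorm_mul _ _).trans (mul_le_mul ((l2_opNorm_mul _ _).trans (mul_le_mul
    (l2_opNorm_kronecker_one_le _) ?_ (norm_nonneg _) (norm_nonneg _))) ?_ (norm_nonneg _)
    (by positivity))
  · refine (l2_opNorm_submatrix_equiv_le _ _ _).trans ((l2_opNorm_kronecker_le _ _).trans ?_)
    gcongr
    exact l2_opNorm_transpose_le w
  · exact (l2_opNorm_kronecker_one_le _).trans (l2_opNorm_conjTranspose _).le

lemma norm_contract_le (y : Matrix (ι × κ) (ι × κ) ℂ) (w : Matrix (μ × κ) (μ × κ) ℂ) :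
    ‖contract y w‖ ≤ ‖blockRow (1 : Matrix (ι × κ) (ι × κ) ℂ)‖ ^ 2 * (‖y‖ * ‖w‖) := by
  have h := norm_contract_mul_conjTranspose_le (1 : Matrix (ι × κ) (ι × κ) ℂ) y 1 w
  rw [conjTranspose_one, Matrix.one_mul, Matrix.mul_one] at h
  exact h.trans_eq (by ring)

end BlockRow

end Contraction

section Interpolation

variable {ι κ μ : Type*} [Fintype ι] [Fintype κ] [Fintype μ] [DecidableEq ι] [DecidableEq κ]
  [DecidableEq μ] [Nonempty κ]

/-- The family `(P₁ ^ (-z/2) ⊗ 1) * P ^ (z/2) * T * Q ^ (z/2) * (Q₁ ^ (-z/2) ⊗ 1)`, analytic in `z`,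
where `P₁` and `Q₁` are the marginals of `P` and `Q`. -/
def analyticFamily (P : Density (ι × κ)) (T : Matrix (ι × κ) (ι × κ) ℂ) (Q : Density (ι × κ))
    (z : ℂ) : Matrix (ι × κ) (ι × κ) ℂ :=
  P.rescaled z * T * (Q.rescaled (star z))ᴴ

variable (P Q : Density (ι × κ)) (T : Matrix (ι × κ) (ι × κ) ℂ) {z : ℂ}

lemma differentiable_analyticFamily : Differentiable ℂ (analyticFamily P T Q) :=
  (P.differentiable_rescaled.mul (differentiable_const T)).mul
    Q.differentiable_conjTranspose_rescaled_star

lemma norm_analyticFamily_le (z : ℂ) :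
    ‖analyticFamily P T Q z‖ ≤ ‖P.rescaled z‖ * ‖T‖ * ‖Q.rescaled (star z)‖ := by
  refine (l2_opNorm_mul _ _).trans ?_
  rw [l2_opNorm_conjTranspose]
  gcongr
  exact l2_opNorm_mul _ _

lemma norm_analyticFamily_le_of_re_eq_zero (hz : z.re = 0) : ‖analyticFamily P T Q z‖ ≤ ‖T‖ := by
  calc ‖analyticFamily P T Q z‖ ≤ ‖P.rescaled z‖ * ‖T‖ * ‖Q.rescaled (star z)‖ :=
        norm_analyticFamily_le P Q T z
    _ ≤ 1 * ‖T‖ * 1 := by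
        gcongr
        · exact P.norm_rescaled_le_one hz
        · exact Q.norm_rescaled_le_one (by simpa using hz)
    _ = ‖T‖ := by ring

lemma exists_norm_analyticFamily_le :
    ∃ K, ∀ z : ℂ, z.re ∈ Set.Icc (0 : ℝ) 1 → ‖analyticFamily P T Q z‖ ≤ K := by
  refine ⟨‖P.marginal.pow (-(1 / 2))‖ * ‖T‖ * ‖Q.marginal.pow (-(1 / 2))‖, fun z hz =>
    (norm_analyticFamily_le P Q T z).trans ?_⟩
  gcongr
  · exact P.norm_rescaled_le_of_mem_strip hz
  · exact Q.norm_rescaled_le_of_mem_strip (by simpa using hz)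

lemma norm_blockRow_rescaled_le_one (hz : z.re = 1) : ‖blockRow (P.rescaled z)‖ ≤ 1 := by
  rw [← l2_opNorm_conjTranspose]
  refine l2_opNorm_le_one_of_conjTranspose_mul_self ?_
  rw [conjTranspose_conjTranspose, blockRow_mul_conjTranspose,
    P.partialTrace_rescaled_mul_conjTranspose hz]

lemma norm_contract_analyticFamily_le (hz : z.re = 1) (w : Matrix (μ × κ) (μ × κ) ℂ) :
    ‖contract (analyticFamily P T Q z) w‖ ≤ ‖T‖ * ‖w‖ := by
  calc ‖contract (analyticFamily P T Q z) w‖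
      ≤ ‖blockRow (P.rescaled z)‖ * (‖w‖ * ‖T‖) * ‖blockRow (Q.rescaled (star z))‖ :=
        norm_contract_mul_conjTranspose_le _ _ _ _
    _ ≤ 1 * (‖w‖ * ‖T‖) * 1 := by
        gcongr
        · exact norm_blockRow_rescaled_le_one P hz
        · exact norm_blockRow_rescaled_le_one Q (by simpa using hz)
    _ = ‖T‖ * ‖w‖ := by ring

lemma kronecker_one_mul_analyticFamily_mul_kronecker_one (z : ℂ) :
    (P.marginal.pow (z / 2) ⊗ₖ (1 : Matrix κ κ ℂ)) * analyticFamily P T Q z *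
      (Q.marginal.pow (z / 2) ⊗ₖ (1 : Matrix κ κ ℂ)) = P.pow (z / 2) * T * Q.pow (z / 2) := by
  have hright : (Q.rescaled (star z))ᴴ * (Q.marginal.pow (z / 2) ⊗ₖ (1 : Matrix κ κ ℂ)) =
      Q.pow (z / 2) := by
    rw [Q.conjTranspose_rescaled_star, Matrix.mul_assoc, ← mul_kronecker_mul, ← Density.pow_add,
      neg_add_cancel, Density.pow_zero, Matrix.one_mul, one_kronecker_one, Matrix.mul_one]
  rw [analyticFamily, ← Matrix.mul_assoc, ← Matrix.mul_assoc, P.rescaled_eq_mul, Matrix.mul_assoc,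
    hright]

variable (P' Q' : Density (μ × κ)) (T' : Matrix (μ × κ) (μ × κ) ℂ)

lemma diffContOnCl_contract_analyticFamily : DiffContOnCl ℂ
    (fun z => contract (analyticFamily P T Q z) (analyticFamily P' T' Q' (1 - z)))
    (Complex.HadamardThreeLines.verticalStrip 0 1) := by
  have hF := differentiable_matrix_iff.1 (differentiable_analyticFamily P Q T)
  have hF' := differentiable_matrix_iff.1 ((differentiable_analyticFamily P' Q' T').comp
    (f := fun z => 1 - z) (by fun_prop))
  exact (differentiable_matrix_iff.2 fun i j => .fun_sum fun k _ => .fun_sum fun l _ =>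
    (hF _ _).mul (hF' _ _)).diffContOnCl

lemma bddAbove_norm_contract_analyticFamily : BddAbove
    ((norm ∘ fun z => contract (analyticFamily P T Q z) (analyticFamily P' T' Q' (1 - z))) ''
      Complex.HadamardThreeLines.verticalClosedStrip 0 1) := by
  obtain ⟨K, hK⟩ := exists_norm_analyticFamily_le P Q T
  obtain ⟨K', hK'⟩ := exists_norm_analyticFamily_le P' Q' T'
  refine ⟨‖blockRow (1 : Matrix (ι × κ) (ι × κ) ℂ)‖ ^ 2 * (K * K'), ?_⟩
  rintro _ ⟨z, hz : z.re ∈ Set.Icc (0 : ℝ) 1, rfl⟩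
  have hz_sub : (1 - z).re ∈ Set.Icc (0 : ℝ) 1 := by
    simpa only [Complex.sub_re, Complex.one_re] using Set.Icc.mem_iff_one_sub_mem.1 hz
  refine (norm_contract_le _ _).trans ?_
  gcongr
  · exact (norm_nonneg _).trans (hK z hz)
  · exact hK z hz
  · exact hK' _ hz_sub

/-- By the three lines theorem: on each edge of the strip one of the two families is bounded by
its middle factor, and the other is contracted through block rows of norm at most one. -/
lemma norm_contract_analyticFamily_analyticFamily_le (hz : z.re ∈ Set.Icc (0 : ℝ) 1) :
    ‖contract (analyticFamily P T Q z) (analyticFamily P' T' Q' (1 - z))‖ ≤ ‖T‖ * ‖T'‖ := by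
  have hleft (ζ : ℂ) (hζ : ζ ∈ Complex.re ⁻¹' {0}) :
      ‖contract (analyticFamily P T Q ζ) (analyticFamily P' T' Q' (1 - ζ))‖ ≤ ‖T‖ * ‖T'‖ := by
    have hre : (1 - ζ).re = 1 := by simpa using hζ
    calc _ ≤ ‖contract (analyticFamily P' T' Q' (1 - ζ)) (analyticFamily P T Q ζ)‖ :=
          norm_contract_comm_le _ _
      _ ≤ ‖T'‖ * ‖analyticFamily P T Q ζ‖ := norm_contract_analyticFamily_le P' Q' T' hre _
      _ ≤ ‖T'‖ * ‖T‖ := by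
          gcongr
          exact norm_analyticFamily_le_of_re_eq_zero P Q T hζ
      _ = ‖T‖ * ‖T'‖ := mul_comm _ _
  have hright (ζ : ℂ) (hζ : ζ ∈ Complex.re ⁻¹' {1}) :
      ‖contract (analyticFamily P T Q ζ) (analyticFamily P' T' Q' (1 - ζ))‖ ≤ ‖T‖ * ‖T'‖ := by
    have hre : (1 - ζ).re = 0 := by simpa [sub_eq_zero] using Eq.symm hζ
    refine (norm_contract_analyticFamily_le P Q T hζ _).trans ?_
    gcongr
    exact norm_analyticFamily_le_of_re_eq_zero P' Q' T' hre
  have h := Complex.HadamardThreeLines.norm_le_interp_of_mem_verticalClosedStrip₀₁' _ hz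
    (diffContOnCl_contract_analyticFamily P Q T P' Q' T')
    (bddAbove_norm_contract_analyticFamily P Q T P' Q' T') hleft hright
  rwa [← Real.rpow_add_of_nonneg (by positivity) (sub_nonneg.2 hz.2) hz.1, sub_add_cancel,
    Real.rpow_one] at h

end Interpolation

section Factorization

lemma Density.pow_mul_pow {ι : Type*} [Fintype ι] [DecidableEq ι] (P Q : Density ι) (f : ι → ℂ)
    (z w : ℂ) :
    P.pow z * (P.basis * diagonal f * (Q.basis : Matrix ι ι ℂ)ᴴ) * Q.pow w =
      P.basis * diagonal (fun i => (P.weight i : ℂ) ^ z * f i * (Q.weight i : ℂ) ^ w) *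
        (Q.basis : Matrix ι ι ℂ)ᴴ := by
  have hP (A : Matrix ι ι ℂ) : (P.basis : Matrix ι ι ℂ)ᴴ * ((P.basis : Matrix ι ι ℂ) * A) = A := by
    rw [← Matrix.mul_assoc, unitaryGroup_conjTranspose_mul_self, Matrix.one_mul]
  have hQ (A : Matrix ι ι ℂ) : (Q.basis : Matrix ι ι ℂ)ᴴ * ((Q.basis : Matrix ι ι ℂ) * A) = A := by
    rw [← Matrix.mul_assoc, unitaryGroup_conjTranspose_mul_self, Matrix.one_mul]
  simp only [Density.pow, Matrix.mul_assoc, hP, hQ]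
  simp only [← Matrix.mul_assoc (diagonal _), diagonal_mul_diagonal, mul_assoc]

variable {ι : Type} [Fintype ι] [DecidableEq ι] {p : ℝ≥0∞} {x : Matrix ι ι ℂ} {r : ℝ}

lemma exists_eq_pow_mul_mul_pow (hp : 1 ≤ p) (hr : schattenNorm p x < r) :
    ∃ (P Q : Density ι) (T : Matrix ι ι ℂ), ‖T‖ ≤ r ∧
      x = P.pow ((p⁻¹).toReal / 2) * T * Q.pow ((p⁻¹).toReal / 2) := by
  obtain ⟨U, V, s, h⟩ := exists_isSVD x
  rw [h.schattenNorm_eq (zero_lt_one.trans_le hp).ne'] at hr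
  obtain ⟨d, hd, hsum, hle⟩ := exists_pos_weights_le hp h.nonneg hr
  have : Fact (1 ≤ p) := ⟨hp⟩
  let P : Density ι := ⟨U, d, hd, hsum⟩
  let Q : Density ι := ⟨V, d, hd, hsum⟩
  have hdpow (i : ι) : 0 < d i ^ (p⁻¹).toReal := Real.rpow_pos_of_pos (hd i) _
  refine ⟨P, Q, U * diagonal (fun i => ((s i / d i ^ (p⁻¹).toReal : ℝ) : ℂ)) *
    (V : Matrix ι ι ℂ)ᴴ, ?_, ?_⟩
  · rw [norm_unitary_mul_diagonal_mul_conjTranspose,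
      pi_norm_le_iff_of_nonneg ((norm_nonneg _).trans hr.le)]
    intro i
    rw [Complex.norm_of_nonneg (div_nonneg (h.nonneg i) (hdpow i).le)]
    exact (div_le_iff₀ (hdpow i)).2 (hle i)
  · have hcancel (i : ι) : (d i : ℂ) ^ ((p⁻¹).toReal / 2 : ℂ) * (s i / d i ^ (p⁻¹).toReal : ℝ) *
        (d i : ℂ) ^ ((p⁻¹).toReal / 2 : ℂ) = s i := by
      rw [mul_right_comm, ← Complex.cpow_add _ _ (P.ofReal_weight_ne_zero i), add_halves,
        ← Complex.ofReal_cpow (hd i).le, ← Complex.ofReal_mul, mul_div_cancel₀ _ (hdpow i).ne']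
    refine h.eq.trans ((P.pow_mul_pow Q _ _ _).trans ?_).symm
    simp only [P, Q, hcancel]

lemma exists_lt_norm_trace_mul (hp : 1 ≤ p) (hr : r < schattenNorm p x) :
    ∃ (P Q : Density ι) (T : Matrix ι ι ℂ), ‖T‖ ≤ 1 ∧
      r < ‖(x * (P.pow ((1 - (p⁻¹).toReal) / 2) * T * Q.pow ((1 - (p⁻¹).toReal) / 2))).trace‖ := by
  obtain ⟨U, V, s, h⟩ := exists_isSVD x
  rw [h.schattenNorm_eq (zero_lt_one.trans_le hp).ne'] at hr
  obtain ⟨d, hd, hsum, hlt⟩ := exists_pos_weights_lt_sum hp h.nonneg hr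
  let P : Density ι := ⟨V, d, hd, hsum⟩
  let Q : Density ι := ⟨U, d, hd, hsum⟩
  refine ⟨P, Q, (V : Matrix ι ι ℂ) * diagonal (fun _ => 1) * (U : Matrix ι ι ℂ)ᴴ, ?_,
    hlt.trans_le ?_⟩
  · rw [norm_unitary_mul_diagonal_mul_conjTranspose, pi_norm_le_iff_of_nonneg zero_le_one]
    simp
  · have hpow (i : ι) : (d i : ℂ) ^ ((1 - (p⁻¹).toReal) / 2 : ℂ) * 1 *
        (d i : ℂ) ^ ((1 - (p⁻¹).toReal) / 2 : ℂ) = (d i ^ (1 - (p⁻¹).toReal) : ℝ) := by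
      rw [mul_one, ← Complex.cpow_add _ _ (P.ofReal_weight_ne_zero i), add_halves,
        Complex.ofReal_cpow (hd i).le, Complex.ofReal_sub, Complex.ofReal_one]
    rw [P.pow_mul_pow Q, h.eq, trace_unitary_mul_diagonal_mul]
    simp only [P, Q, hpow, ← Complex.ofReal_mul, ← Complex.ofReal_sum, Complex.norm_real]
    exact le_abs_self _

end Factorization

section HilbertSchmidt

variable {ι κ : Type*} [Fintype ι] [Fintype κ]

/-- The Hilbert–Schmidt norm, which is the Schatten `2`-norm. -/
def hsNorm (A : Matrix ι κ ℂ) : ℝ :=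
  ‖WithLp.toLp 2 (vec A)‖

lemma hsNorm_nonneg (A : Matrix ι κ ℂ) : 0 ≤ hsNorm A :=
  norm_nonneg _

lemma hsNorm_sq (A : Matrix ι κ ℂ) : hsNorm A ^ 2 = ∑ i, ∑ j, ‖A i j‖ ^ 2 := by
  rw [hsNorm, EuclideanSpace.norm_sq_eq, Fintype.sum_prod_type_right]
  rfl

lemma ofReal_hsNorm_sq (A : Matrix ι κ ℂ) : ((hsNorm A ^ 2 : ℝ) : ℂ) = (Aᴴ * A).trace := by
  rw [← star_vec_dotProduct_vec, hsNorm, ← dotProduct_comm, ← EuclideanSpace.inner_toLp_toLp,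
    inner_self_eq_norm_sq_to_K]
  simp

lemma hsNorm_eq_of_trace_eq {ρ σ : Type*} [Fintype ρ] [Fintype σ] {A : Matrix ι κ ℂ}
    {B : Matrix ρ σ ℂ} (h : (Aᴴ * A).trace = (Bᴴ * B).trace) : hsNorm A = hsNorm B := by
  rw [← ofReal_hsNorm_sq, ← ofReal_hsNorm_sq, Complex.ofReal_inj] at h
  exact (sq_eq_sq₀ (hsNorm_nonneg A) (hsNorm_nonneg B)).1 h

lemma hsNorm_conjTranspose (A : Matrix ι κ ℂ) : hsNorm Aᴴ = hsNorm A :=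
  hsNorm_eq_of_trace_eq (by rw [conjTranspose_conjTranspose, trace_mul_comm])

lemma hsNorm_transpose (A : Matrix ι κ ℂ) : hsNorm Aᵀ = hsNorm A :=
  hsNorm_eq_of_trace_eq (by
    rw [← trace_transpose, transpose_mul, transpose_transpose, trace_mul_comm]
    rfl)

lemma hsNorm_unitary_mul [DecidableEq ι] (U : unitaryGroup ι ℂ) (A : Matrix ι κ ℂ) :
    hsNorm ((U : Matrix ι ι ℂ) * A) = hsNorm A :=
  hsNorm_eq_of_trace_eq (by
    rw [conjTranspose_mul, Matrix.mul_assoc, ← Matrix.mul_assoc (U : Matrix ι ι ℂ)ᴴ,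
      unitaryGroup_conjTranspose_mul_self, Matrix.one_mul])

lemma hsNorm_mul_conjTranspose_unitary [DecidableEq κ] (A : Matrix ι κ ℂ) (V : unitaryGroup κ ℂ) :
    hsNorm (A * (V : Matrix κ κ ℂ)ᴴ) = hsNorm A := by
  rw [← hsNorm_conjTranspose, conjTranspose_mul, conjTranspose_conjTranspose, hsNorm_unitary_mul,
    hsNorm_conjTranspose]

variable [DecidableEq ι]

lemma sum_norm_sq_unitary_row (K : unitaryGroup ι ℂ) (i : ι) :
    ∑ j, ‖(K : Matrix ι ι ℂ) i j‖ ^ 2 = 1 := by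
  have h := congrFun (congrFun (unitaryGroup_mul_conjTranspose_self K) i) i
  simp only [mul_apply, conjTranspose_apply, one_apply_eq, Complex.star_def, Complex.mul_conj,
    Complex.normSq_eq_norm_sq] at h
  exact_mod_cast h

lemma sum_norm_sq_unitary_col (K : unitaryGroup ι ℂ) (j : ι) :
    ∑ i, ‖(K : Matrix ι ι ℂ) i j‖ ^ 2 = 1 := by
  simpa using sum_norm_sq_unitary_row (star K) j

lemma sum_mix_mul_norm_sq_unitary_le_one (K : unitaryGroup ι ℂ) {d e : ι → ℝ} {t : ℝ}
    (hd : ∑ i, d i ≤ 1) (he : ∑ i, e i ≤ 1) (ht0 : 0 ≤ t) (ht1 : t ≤ 1) :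
    ∑ i, ∑ j, (t * e i + (1 - t) * d j) * ‖(K : Matrix ι ι ℂ) i j‖ ^ 2 ≤ 1 := by
  have hrow : ∑ i, ∑ j, t * e i * ‖(K : Matrix ι ι ℂ) i j‖ ^ 2 = t * ∑ i, e i := by
    simp only [← Finset.mul_sum, sum_norm_sq_unitary_row, mul_one]
  have hcol : ∑ i, ∑ j, (1 - t) * d j * ‖(K : Matrix ι ι ℂ) i j‖ ^ 2 = (1 - t) * ∑ j, d j := by
    rw [Finset.sum_comm]
    simp only [← Finset.mul_sum, sum_norm_sq_unitary_col, mul_one]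
  simp only [add_mul, Finset.sum_add_distrib, hrow, hcol]
  nlinarith

end HilbertSchmidt

section Hoelder

variable {ι : Type} [Fintype ι] [DecidableEq ι] {p : ℝ≥0∞}

lemma IsSVD.hsNorm_mul_pow_sq {x : Matrix ι ι ℂ} {U V : unitaryGroup ι ℂ} {s : ι → ℝ}
    (h : IsSVD x U V s) (D : Density ι) (t : ℝ) :
    hsNorm (x * D.pow (t / 2 : ℝ)) ^ 2 =
      ∑ i, ∑ j, s i ^ 2 * D.weight j ^ t *
        ‖((star V * D.basis : unitaryGroup ι ℂ) : Matrix ι ι ℂ) i j‖ ^ 2 := by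
  have hfactor : x * D.pow (t / 2 : ℝ) = (U : Matrix ι ι ℂ) * (diagonal (fun i => (s i : ℂ)) *
      ((star V * D.basis : unitaryGroup ι ℂ) : Matrix ι ι ℂ) *
        diagonal (fun j => ((D.weight j ^ (t / 2) : ℝ) : ℂ))) * (D.basis : Matrix ι ι ℂ)ᴴ := by
    rw [(D.isSVD_pow _).eq]
    nth_rw 1 [h.eq]
    simp only [Matrix.mul_assoc, Submonoid.coe_mul, Unitary.coe_star, star_eq_conjTranspose]
  rw [hfactor, hsNorm_mul_conjTranspose_unitary, hsNorm_unitary_mul, hsNorm_sq]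
  refine Finset.sum_congr rfl fun i _ => Finset.sum_congr rfl fun j _ => ?_
  have hpow : (D.weight j ^ (t / 2)) ^ 2 = D.weight j ^ t := by
    rw [← Real.rpow_mul_natCast (D.weight_pos j).le]
    congr 1
    push_cast
    ring
  rw [mul_diagonal, diagonal_mul, norm_mul, norm_mul, Complex.norm_real, Complex.norm_real, mul_pow,
    mul_pow, Real.norm_eq_abs, Real.norm_eq_abs, sq_abs, sq_abs, hpow, mul_right_comm]

lemma exists_weights_sq_le {ι : Type*} [Fintype ι] {s : ι → ℝ} (hp : 1 ≤ 2 * p)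
    (hs : ∀ i, 0 ≤ s i) : ∃ e : ι → ℝ, (∀ i, 0 ≤ e i) ∧ ∑ i, e i ≤ 1 ∧
      ∀ i, s i ^ 2 ≤ ‖WithLp.toLp (2 * p) s‖ ^ 2 * e i ^ (p⁻¹).toReal := by
  obtain ⟨e, he, hsum, hle, -⟩ := exists_weights hp hs
  refine ⟨e, he, hsum, fun i => ?_⟩
  have hexp : (e i ^ ((2 * p)⁻¹).toReal) ^ 2 = e i ^ (p⁻¹).toReal := by
    rw [← Real.rpow_mul_natCast (he i), toReal_inv_two_mul]
    congr 1
    push_cast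
    ring
  rw [← hexp, ← mul_pow]
  exact pow_le_pow_left₀ (hs i) (hle i) 2

lemma hsNorm_mul_pow_le (hp : 1 ≤ p) (b : Matrix ι ι ℂ) (D : Density ι) :
    hsNorm (b * D.pow ((1 - (p⁻¹).toReal) / 2 : ℝ)) ≤ schattenNorm (2 * p) b := by
  have hp2 : 1 ≤ 2 * p := hp.trans (le_mul_of_one_le_left' one_le_two)
  obtain ⟨U, V, s, h⟩ := exists_isSVD b
  obtain ⟨e, he, hsum, hsq⟩ := exists_weights_sq_le hp2 h.nonneg
  rw [h.schattenNorm_eq (zero_lt_one.trans_le hp2).ne']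
  have : Fact (1 ≤ 2 * p) := ⟨hp2⟩
  set M := ‖WithLp.toLp (2 * p) s‖
  have hM : 0 ≤ M := norm_nonneg _
  have hθ0 : 0 ≤ (p⁻¹).toReal := ENNReal.toReal_nonneg
  have hθ1 := toReal_inv_le_one hp
  set K := star V * D.basis
  have hterm (i j : ι) : s i ^ 2 * D.weight j ^ (1 - (p⁻¹).toReal) ≤
      M ^ 2 * ((p⁻¹).toReal * e i + (1 - (p⁻¹).toReal) * D.weight j) := by
    calc _ ≤ M ^ 2 * e i ^ (p⁻¹).toReal * D.weight j ^ (1 - (p⁻¹).toReal) := by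
          gcongr
          · exact Real.rpow_nonneg (D.weight_pos j).le _
          · exact hsq i
      _ ≤ _ := by
          rw [mul_assoc]
          gcongr
          exact Real.geom_mean_le_arith_mean2_weighted hθ0 (sub_nonneg.2 hθ1) (he i)
            (D.weight_pos j).le (add_sub_cancel _ _)
  refine le_of_sq_le_sq ?_ hM
  rw [h.hsNorm_mul_pow_sq]
  calc _ ≤ ∑ i, ∑ j, M ^ 2 * ((p⁻¹).toReal * e i + (1 - (p⁻¹).toReal) * D.weight j) *
          ‖(K : Matrix ι ι ℂ) i j‖ ^ 2 := by
        exact Finset.sum_le_sum fun i _ => Finset.sum_le_sum fun j _ =>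
          mul_le_mul_of_nonneg_right (hterm i j) (sq_nonneg _)
    _ = M ^ 2 * ∑ i, ∑ j, ((p⁻¹).toReal * e i + (1 - (p⁻¹).toReal) * D.weight j) *
          ‖(K : Matrix ι ι ℂ) i j‖ ^ 2 := by
        simp only [Finset.mul_sum, mul_assoc]
    _ ≤ M ^ 2 := mul_le_of_le_one_right (sq_nonneg M) <|
        sum_mix_mul_norm_sq_unitary_le_one K D.sum_weight_le_one hsum hθ0 hθ1

lemma hsNorm_pow_mul_le (hp : 1 ≤ p) (D : Density ι) (a : Matrix ι ι ℂ) :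
    hsNorm (D.pow ((1 - (p⁻¹).toReal) / 2 : ℝ) * a) ≤ schattenNorm (2 * p) a := by
  have h := hsNorm_mul_pow_le hp aᴴ D
  rw [schattenNorm_conjTranspose (by positivity)] at h
  rwa [← hsNorm_conjTranspose, conjTranspose_mul, D.conjTranspose_pow, Complex.star_def,
    Complex.conj_ofReal]

end Hoelder

section PisierNorm

variable {p : ℝ≥0∞} {N n m : ℕ}

lemma pisierNorm_le (a b : Matrix (Fin N) (Fin N) ℂ)
    (y : Matrix (Fin N × Fin n) (Fin N × Fin n) ℂ) :
    pisierNorm p ((a ⊗ₖ (1 : Matrix (Fin n) (Fin n) ℂ)) * y *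
      (b ⊗ₖ (1 : Matrix (Fin n) (Fin n) ℂ))) ≤
      schattenNorm (2 * p) a * ‖y‖ * schattenNorm (2 * p) b := by
  refine csInf_le ⟨0, ?_⟩ ⟨a, b, y, rfl, rfl⟩
  rintro r ⟨a, b, y, -, rfl⟩
  exact mul_nonneg (mul_nonneg (schattenNorm_nonneg _ a) (norm_nonneg _)) (schattenNorm_nonneg _ b)

lemma le_pisierNorm {x : Matrix (Fin N × Fin n) (Fin N × Fin n) ℂ} {r : ℝ}
    (h : ∀ (a b : Matrix (Fin N) (Fin N) ℂ) (y : Matrix (Fin N × Fin n) (Fin N × Fin n) ℂ),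
      x = (a ⊗ₖ (1 : Matrix (Fin n) (Fin n) ℂ)) * y * (b ⊗ₖ (1 : Matrix (Fin n) (Fin n) ℂ)) →
      r ≤ schattenNorm (2 * p) a * ‖y‖ * schattenNorm (2 * p) b) :
    r ≤ pisierNorm p x := by
  refine le_csInf ⟨_, 1, 1, x, by simp, rfl⟩ ?_
  rintro _ ⟨a, b, y, hx, rfl⟩
  exact h a b y hx

lemma norm_le_pisierNorm (hp : 1 ≤ p) (x : Matrix (Fin N × Fin n) (Fin N × Fin n) ℂ) :
    ‖x‖ ≤ pisierNorm p x := by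
  have hp2 : 1 ≤ 2 * p := hp.trans (le_mul_of_one_le_left' one_le_two)
  refine le_pisierNorm fun a b y hx => ?_
  have hnorm (c : Matrix (Fin N) (Fin N) ℂ) :
      ‖c ⊗ₖ (1 : Matrix (Fin n) (Fin n) ℂ)‖ ≤ schattenNorm (2 * p) c :=
    (l2_opNorm_kronecker_one_le c).trans (norm_le_schattenNorm hp2 c)
  rw [hx]
  refine (l2_opNorm_mul _ _).trans (mul_le_mul ((l2_opNorm_mul _ _).trans ?_) (hnorm b)
    (norm_nonneg _) (mul_nonneg (schattenNorm_nonneg _ a) (norm_nonneg y)))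
  gcongr
  exact hnorm a

lemma pisierNorm_contract_le [NeZero n] (hp : 1 ≤ p) (P Q : Density (Fin N × Fin n))
    (T : Matrix (Fin N × Fin n) (Fin N × Fin n) ℂ) (P' Q' : Density (Fin m × Fin n))
    (T' : Matrix (Fin m × Fin n) (Fin m × Fin n) ℂ) :
    pisierNorm p (contract (P.pow ((p⁻¹).toReal / 2) * T * Q.pow ((p⁻¹).toReal / 2))
      (analyticFamily P' T' Q' (1 - (p⁻¹).toReal))) ≤ ‖T‖ * ‖T'‖ := by
  have hp2 : 2 * p ≠ 0 := by positivity
  have hmem : ((p⁻¹).toReal : ℂ).re ∈ Set.Icc (0 : ℝ) 1 :=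
    ⟨ENNReal.toReal_nonneg, toReal_inv_le_one hp⟩
  have hmarginal (D : Density (Fin N)) : schattenNorm (2 * p) (D.pow ((p⁻¹).toReal / 2)) ≤ 1 := by
    have h := D.schattenNorm_pow_le_one hp2
    rwa [toReal_inv_two_mul, Complex.ofReal_div, Complex.ofReal_ofNat] at h
  rw [← kronecker_one_mul_analyticFamily_mul_kronecker_one, contract_mul_kronecker_one,
    contract_kronecker_one_mul]
  calc _ ≤ _ := pisierNorm_le _ _ _
    _ ≤ 1 * (‖T‖ * ‖T'‖) * 1 := by
        gcongr
        · exact schattenNorm_nonneg _ _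
        · exact hmarginal _
        · exact norm_contract_analyticFamily_analyticFamily_le P Q T P' Q' T' hmem
        · exact hmarginal _
    _ = ‖T‖ * ‖T'‖ := by ring

lemma tracePair_eq_vec_one_dotProduct (y : Matrix (Fin m × Fin m) (Fin m × Fin m) ℂ) :
    tracePair y =
      vec (1 : Matrix (Fin m) (Fin m) ℂ) ⬝ᵥ (y *ᵥ vec (1 : Matrix (Fin m) (Fin m) ℂ)) := by
  simp [tracePair, dotProduct, mulVec, vec, one_apply, Fintype.sum_prod_type]

lemma norm_tracePair_kronecker_mul_mul_le (a b α β : Matrix (Fin m) (Fin m) ℂ)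
    (y : Matrix (Fin m × Fin m) (Fin m × Fin m) ℂ) :
    ‖tracePair ((a ⊗ₖ βᵀ) * y * (b ⊗ₖ αᵀ))‖ ≤ hsNorm (β * a) * ‖y‖ * hsNorm (b * α) := by
  rw [tracePair_eq_vec_one_dotProduct, ← mulVec_mulVec, kronecker_mulVec_vec, ← mulVec_mulVec,
    dotProduct_mulVec, vec_vecMul_kronecker, transpose_transpose, Matrix.mul_one, Matrix.mul_one,
    ← transpose_mul, ← hsNorm_transpose (b * α)]
  exact norm_dotProduct_mulVec_le _ _ _

lemma norm_tracePair_le_pisierNorm (hp : 1 ≤ p) (A B : Density (Fin m))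
    (x : Matrix (Fin m × Fin m) (Fin m × Fin m) ℂ) :
    ‖tracePair (((1 : Matrix (Fin m) (Fin m) ℂ) ⊗ₖ (B.pow ((1 - (p⁻¹).toReal) / 2))ᵀ) * x *
      ((1 : Matrix (Fin m) (Fin m) ℂ) ⊗ₖ (A.pow ((1 - (p⁻¹).toReal) / 2))ᵀ))‖ ≤
      pisierNorm p x := by
  refine le_pisierNorm fun a b y hx => ?_
  have ha := hsNorm_pow_mul_le hp B a
  have hb := hsNorm_mul_pow_le hp b A
  push_cast at ha hb
  set α := A.pow ((1 - (p⁻¹).toReal) / 2)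
  set β := B.pow ((1 - (p⁻¹).toReal) / 2)
  have hassoc : ((1 : Matrix (Fin m) (Fin m) ℂ) ⊗ₖ βᵀ) * x * ((1 : Matrix (Fin m) (Fin m) ℂ) ⊗ₖ αᵀ)
      = (a ⊗ₖ βᵀ) * y * (b ⊗ₖ αᵀ) := by
    rw [hx]
    simp only [Matrix.mul_assoc, ← mul_kronecker_mul, Matrix.mul_one, Matrix.one_mul]
    simp only [← Matrix.mul_assoc, ← mul_kronecker_mul, Matrix.mul_one, Matrix.one_mul]
  rw [hassoc]
  refine (norm_tracePair_kronecker_mul_mul_le a b α β y).trans ?_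
  have := hsNorm_nonneg (b * α)
  have := schattenNorm_nonneg (2 * p) a
  gcongr

lemma trace_mul_eq_tracePair_contract (v w : Matrix (Fin m × Fin n) (Fin m × Fin n) ℂ) :
    (v * w).trace = tracePair (contract v w) := by
  simp only [trace, diag_apply, mul_apply, tracePair, contract, of_apply, Fintype.sum_prod_type]
  exact Finset.sum_congr rfl fun i _ => Finset.sum_comm

lemma norm_trace_mul_le_pisierNorm_contract [NeZero n] (hp : 1 ≤ p) (P Q : Density (Fin m × Fin n))
    (T v : Matrix (Fin m × Fin n) (Fin m × Fin n) ℂ) :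
    ‖(v * (P.pow ((1 - (p⁻¹).toReal) / 2) * T * Q.pow ((1 - (p⁻¹).toReal) / 2))).trace‖ ≤
      pisierNorm p (contract v (analyticFamily P T Q (1 - (p⁻¹).toReal))) := by
  rw [← kronecker_one_mul_analyticFamily_mul_kronecker_one, trace_mul_eq_tracePair_contract,
    contract_mul_kronecker_one_right, contract_kronecker_one_mul_right, ← Matrix.mul_assoc]
  exact norm_tracePair_le_pisierNorm hp _ _ _

end PisierNorm

section Amplification

variable {N n m : ℕ} (u : Matrix (Fin N) (Fin N) ℂ →ₗ[ℂ] Matrix (Fin m) (Fin m) ℂ)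

lemma amp_zero : amp u (0 : Matrix (Fin N × Fin n) (Fin N × Fin n) ℂ) = 0 := by
  ext i j
  exact congrFun (congrFun (map_zero u) i.1) j.1

lemma amp_contract (x : Matrix (Fin N × Fin n) (Fin N × Fin n) ℂ)
    (w : Matrix (Fin m × Fin n) (Fin m × Fin n) ℂ) :
    amp u (contract x w) = contract (amp u x) w := by
  ext ⟨i, i'⟩ ⟨j, j'⟩
  have hblock : (of fun r s => contract x w (r, i') (s, j') : Matrix (Fin N) (Fin N) ℂ) =
      ∑ k, ∑ l, w (j', l) (i', k) • of fun r s => x (r, k) (s, l) := by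
    ext r s
    simp [contract, Matrix.sum_apply, mul_comm]
  simp only [amp, of_apply]
  rw [hblock]
  simp only [contract, of_apply, map_sum, map_smul, Matrix.sum_apply, Matrix.smul_apply,
    smul_eq_mul, mul_comm (w _ _)]

end Amplification

section Regular

variable {N m n k : ℕ} {p : ℝ≥0∞} {C : ℝ} {x : Matrix (Fin N × Fin n) (Fin N × Fin n) ℂ}
  {y : Matrix (Fin m × Fin k) (Fin m × Fin k) ℂ}

lemma nonneg_of_pisierNorm_le_mul (hp : 1 ≤ p) (hx : x ≠ 0)
    (h : pisierNorm p y ≤ C * pisierNorm p x) : 0 ≤ C :=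
  nonneg_of_mul_nonneg_left (((norm_nonneg y).trans (norm_le_pisierNorm hp y)).trans h)
    ((norm_pos_iff.2 hx).trans_le (norm_le_pisierNorm hp x))

lemma mul_schattenNorm_nonneg_of_pisierNorm_le_mul (hp : 1 ≤ p)
    (h : pisierNorm p y ≤ C * pisierNorm p x) : 0 ≤ C * schattenNorm p x := by
  rcases eq_or_ne x 0 with rfl | hx
  · rw [schattenNorm_zero (zero_lt_one.trans_le hp).ne', mul_zero]
  · exact mul_nonneg (nonneg_of_pisierNorm_le_mul hp hx h) (schattenNorm_nonneg p x)

end Regular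

end PisierSchatten

end

section

open PisierSchatten
open scoped Matrix.Norms.L2Operator

theorem schatten_bound_of_regular_general {N m : ℕ} [NeZero m] {p : ℝ≥0∞} (hp : 1 ≤ p) {C : ℝ}
    (u : Matrix (Fin N) (Fin N) ℂ →ₗ[ℂ] Matrix (Fin m) (Fin m) ℂ)
    (hr : ∀ x : Matrix (Fin N × Fin m) (Fin N × Fin m) ℂ,
      pisierNorm p (amp u x) ≤ C * pisierNorm p x) {n : ℕ}
    (x : Matrix (Fin N × Fin n) (Fin N × Fin n) ℂ) :
    schattenNorm p (amp u x) ≤ C * schattenNorm p x := by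
  rcases eq_or_ne x 0 with rfl | hx0
  · have hp0 : p ≠ 0 := (zero_lt_one.trans_le hp).ne'
    rw [amp_zero, schattenNorm_zero hp0, schattenNorm_zero hp0, mul_zero]
  obtain ⟨i, -, -⟩ : ∃ i j, x i j ≠ 0 := by simpa [← Matrix.ext_iff] using hx0
  have : NeZero n := NeZero.of_pos i.2.pos
  have : Nonempty (Fin N × Fin m) := ⟨i.1, 0⟩
  have hC : 0 ≤ C := nonneg_of_pisierNorm_le_mul hp one_ne_zero (hr 1)
  refine le_of_forall_lt_imp_le_of_dense fun r hrlt => le_mul_of_forall_lt₀ fun C' hC' s hs => ?_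
  obtain ⟨P, Q, T, hT, hx⟩ := exists_eq_pow_mul_mul_pow hp hs
  obtain ⟨P', Q', T', hT', htrace⟩ := exists_lt_norm_trace_mul hp hrlt
  have hs0 : 0 ≤ s := (norm_nonneg T).trans hT
  have hC0 : 0 ≤ C' := hC.trans hC'.le
  calc r ≤ pisierNorm p (contract (amp u x) (analyticFamily P' T' Q' (1 - (p⁻¹).toReal))) :=
        htrace.le.trans (norm_trace_mul_le_pisierNorm_contract hp P' Q' T' _)
    _ = pisierNorm p (amp u (contract x (analyticFamily P' T' Q' (1 - (p⁻¹).toReal)))) := by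
        rw [amp_contract]
    _ ≤ C * pisierNorm p (contract x (analyticFamily P' T' Q' (1 - (p⁻¹).toReal))) := hr _
    _ ≤ C * (‖T‖ * ‖T'‖) := by
        rw [hx]
        gcongr
        exact pisierNorm_contract_le hp P Q T P' Q' T'
    _ ≤ C' * (s * 1) := by gcongr
    _ = C' * s := by rw [mul_one]

end

/-- Matrix-algebra form of Proposition 2.2: every regular map is completely bounded with
`‖u‖_cb ≤ ‖u‖_r`. -/
theorem schatten_bound_of_regular {N m : ℕ} (p : ℝ≥0∞) (hp : 1 ≤ p) (C : ℝ)
    (u : Matrix (Fin N) (Fin N) ℂ →ₗ[ℂ] Matrix (Fin m) (Fin m) ℂ)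
    (hr : ∀ n : ℕ, 1 ≤ n → ∀ x : Matrix (Fin N × Fin n) (Fin N × Fin n) ℂ,
      pisierNorm p (amp (⇑u) x) ≤ C * pisierNorm p x) :
    ∀ n : ℕ, 1 ≤ n → ∀ x : Matrix (Fin N × Fin n) (Fin N × Fin n) ℂ,
      schattenNorm p (amp (⇑u) x) ≤ C * schattenNorm p x := by
  intro n hn x
  rcases m.eq_zero_or_pos with rfl | hm
  · rw [Subsingleton.elim (amp u x) 0,
      PisierSchatten.schattenNorm_zero (zero_lt_one.trans_le hp).ne']
    exact PisierSchatten.mul_schattenNorm_nonneg_of_pisierNorm_le_mul hp (hr n hn x)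
  · have : NeZero m := NeZero.of_pos hm
    exact schatten_bound_of_regular_general hp u (hr m hm) x
end

section
/- Let 1 ≤ p ≤ ∞ and n, m ≥ 1. The function ρ_p is a norm on M_n ⊗ M_m: it is finite everywhere, absolutely homogeneous, satisfies the triangle inequality ρ_p(a + b) ≤ ρ_p(a) + ρ_p(b), and ρ_p(a) = 0 implies a = 0. (The conclusion of Theorem 3.1; the paper notes that the triangle inequality is surprisingly nontrivial.) -/
open scoped Kronecker ENNReal Classical ComplexOrder
open Matrix

/-!
Let `s = 1 / p`. By polar decomposition, `ρ_p(a) < 1` implies that there are positive definite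
matrices `X`, `X'`, `Y`, `Y'` of trace at most `1` for which the block matrix
`[X ^ s ⊗ Y ^ (1 - s), a; aᴴ, X' ^ s ⊗ Y' ^ (1 - s)]` is positive: the contraction `g` is what is
left of `a` once the square roots of the diagonal blocks are divided out. Conversely, such matrices
yield `ρ_p(a) ≤ 1`. The trace constraints and positivity being convex conditions, convexity of the
unit ball, and hence the triangle inequality, follows from the joint concavity of
`(X, Y) ↦ X ^ s ⊗ Y ^ (1 - s)` (Lieb, Ando). For the latter,
`X ^ ((u + v) / 2) ⊗ Y ^ (1 - (u + v) / 2)` is the largest Hermitian `Z` making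
`[X ^ u ⊗ Y ^ (1 - u), Z; Z, X ^ v ⊗ Y ^ (1 - v)]` positive, so concavity passes from the
exponents `u` and `v` to their midpoint; it holds trivially for `0` and `1`, and in between by
continuity in the exponent.
-/

section

open scoped MatrixOrder Matrix.Norms.L2Operator Pointwise

theorem Icc_subset_of_midpoint_mem {s : Set ℝ} {a b : ℝ} (hs : IsClosed s)
    (ha : a ∈ s) (hb : b ∈ s) (hmid : ∀ u ∈ s, ∀ v ∈ s, (u + v) / 2 ∈ s) :
    Set.Icc a b ⊆ s := by
  rintro c ⟨hac, hcb⟩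
  obtain ⟨u, ⟨hus, hau, huc⟩, hu⟩ :=
    (isCompact_Icc.inter_left hs).exists_isGreatest ⟨a, ha, le_rfl, hac⟩
  obtain ⟨v, ⟨hvs, hcv, hvb⟩, hv⟩ :=
    (isCompact_Icc.inter_left hs).exists_isLeast ⟨b, hb, hcb, le_rfl⟩
  rcases le_total ((u + v) / 2) c with h | h
  · have := hu ⟨hmid u hus v hvs, by linarith, h⟩
    exact (show u = c by linarith) ▸ hus
  · have := hv ⟨hmid u hus v hvs, h, by linarith⟩
    exact (show v = c by linarith) ▸ hvs

section CStarAlgebra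

variable {A : Type*} [CStarAlgebra A] [PartialOrder A] [StarOrderedRing A] {a b : A}

theorem le_of_mul_self_le_mul_self (ha : IsSelfAdjoint a) (hb : 0 ≤ b) (h : a * a ≤ b * b) :
    a ≤ b :=
  calc a ≤ CFC.abs a := by
        rw [← sub_nonneg, CFC.abs_sub_self a]
        exact nsmul_nonneg (CFC.negPart_nonneg a) 2
    _ ≤ CFC.sqrt (b * b) := CFC.sqrt_le_sqrt _ _ (by rwa [ha.star_eq])
    _ = b := CFC.sqrt_mul_self b

theorem rpow_eq_exp_smul_log (ha : IsStrictlyPositive a) (s : ℝ) :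
    a ^ s = NormedSpace.exp (s • CFC.log a) := by
  have hpos : ∀ x ∈ spectrum ℝ a, 0 < x := fun x hx => ha.spectrum_pos hx
  have hlog : ContinuousOn Real.log (spectrum ℝ a) :=
    Real.continuousOn_log.mono fun x hx => (hpos x hx).ne'
  have hsa : IsSelfAdjoint (s • CFC.log a) := (IsSelfAdjoint.all s).smul IsSelfAdjoint.log
  rw [← CFC.real_exp_eq_normedSpace_exp hsa, CFC.log,
    ← cfc_smul s Real.log a, ← cfc_comp' Real.exp _ a, CFC.rpow_eq_cfc_real ha.nonneg]
  refine cfc_congr fun x hx => ?_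
  rw [Real.rpow_def_of_pos (hpos x hx), smul_eq_mul, mul_comm]

theorem continuous_const_rpow (ha : IsStrictlyPositive a) : Continuous fun s : ℝ => a ^ s := by
  let : NormedAlgebra ℚ A := .restrictScalars ℚ ℝ A
  simp_rw [rpow_eq_exp_smul_log ha]
  exact NormedSpace.exp_continuous.comp (continuous_id.smul continuous_const)

theorem smul_rpow {c s : ℝ} (hc : 0 ≤ c) (hs : 0 ≤ s) (ha : 0 ≤ a) :
    (c • a) ^ s = c ^ s • a ^ s := by
  have hcont : Continuous fun x : ℝ => x ^ s := Real.continuous_rpow_const hs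
  rw [CFC.rpow_eq_cfc_real ha, CFC.rpow_eq_cfc_real (smul_nonneg hc ha),
    ← cfc_comp_const_mul c _ a hcont.continuousOn, ← cfc_smul _ _ a hcont.continuousOn]
  exact cfc_congr fun x hx => Real.mul_rpow hc (spectrum_nonneg_of_nonneg ha hx)

end CStarAlgebra

theorem convex_posDef {𝕜 ι : Type*} [RCLike 𝕜] : Convex ℝ {A : Matrix ι ι 𝕜 | A.PosDef} := by
  intro A hA B hB a b ha hb hab
  rcases ha.eq_or_lt with rfl | ha
  · obtain rfl : b = 1 := by simpa using hab
    simpa using hB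
  · exact (hA.smul ha).add_posSemidef (hB.posSemidef.smul hb)

section Blocks

variable {𝕜 ι κ : Type*} [RCLike 𝕜]

section Finite

variable [Finite ι] [Finite κ]

theorem fromBlocks_diagonal_nonneg {A : Matrix ι ι 𝕜} {D : Matrix κ κ 𝕜} (hA : 0 ≤ A)
    (hD : 0 ≤ D) : 0 ≤ fromBlocks A 0 0 D := by
  have := Fintype.ofFinite ι
  have := Fintype.ofFinite κ
  obtain ⟨S, rfl⟩ := CStarAlgebra.nonneg_iff_eq_star_mul_self.1 hA
  obtain ⟨T, rfl⟩ := CStarAlgebra.nonneg_iff_eq_star_mul_self.1 hD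
  simpa [fromBlocks_multiply, fromBlocks_conjTranspose, star_eq_conjTranspose] using
    star_mul_self_nonneg (fromBlocks S 0 0 T)

theorem fromBlocks_nonneg_mono {A A' : Matrix ι ι 𝕜} {B C} {D D' : Matrix κ κ 𝕜}
    (h : 0 ≤ fromBlocks A B C D) (hA : A ≤ A') (hD : D ≤ D') : 0 ≤ fromBlocks A' B C D' := by
  have := add_nonneg h (fromBlocks_diagonal_nonneg (sub_nonneg.2 hA) (sub_nonneg.2 hD))
  simpa [fromBlocks_add] using this

theorem kronecker_mono {A A' : Matrix ι ι 𝕜} {B B' : Matrix κ κ 𝕜} (hA : A ≤ A') (hB : B ≤ B')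
    (hA' : 0 ≤ A') (hB₀ : 0 ≤ B) : A ⊗ₖ B ≤ A' ⊗ₖ B' := by
  obtain ⟨P, hP, rfl⟩ := exists_nonneg_add_of_le hA
  obtain ⟨Q, hQ, rfl⟩ := exists_nonneg_add_of_le hB
  calc A ⊗ₖ B ≤ A ⊗ₖ B + P ⊗ₖ B :=
        le_add_of_nonneg_right (hP.posSemidef.kronecker hB₀.posSemidef).nonneg
    _ = (A + P) ⊗ₖ B := (add_kronecker ..).symm
    _ ≤ (A + P) ⊗ₖ B + (A + P) ⊗ₖ Q :=
        le_add_of_nonneg_right (hA'.posSemidef.kronecker hQ.posSemidef).nonneg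
    _ = (A + P) ⊗ₖ (B + Q) := (kronecker_add ..).symm

end Finite

variable [Fintype ι]

theorem fromBlocks_nonneg_iff₁₁ [Finite κ] [DecidableEq ι] {A : Matrix ι ι 𝕜} (hA : A.PosDef)
    (B : Matrix ι κ 𝕜) (D : Matrix κ κ 𝕜) : 0 ≤ fromBlocks A B Bᴴ D ↔ Bᴴ * A⁻¹ * B ≤ D := by
  have := Fintype.ofFinite κ
  have := hA.isUnit.invertible
  rw [nonneg_iff_posSemidef, hA.fromBlocks₁₁, le_iff]

theorem fromBlocks_conjugate_nonneg [Fintype κ] {A : Matrix ι ι 𝕜} {B} {D : Matrix κ κ 𝕜}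
    (h : 0 ≤ fromBlocks A B Bᴴ D) (L : Matrix ι ι 𝕜) (R : Matrix κ κ 𝕜) :
    0 ≤ fromBlocks (L * A * Lᴴ) (L * B * R) (L * B * R)ᴴ (Rᴴ * D * R) := by
  have := h.posSemidef.mul_mul_conjTranspose_same (fromBlocks L 0 0 Rᴴ)
  simpa [fromBlocks_multiply, fromBlocks_conjTranspose, Matrix.mul_assoc, nonneg_iff_posSemidef]
    using this

end Blocks

section BlockContractions

variable {ι : Type*} [Fintype ι] [DecidableEq ι]

theorem fromBlocks_one_nonneg_iff {g : Matrix ι ι ℂ} :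
    0 ≤ fromBlocks 1 g gᴴ 1 ↔ ‖g‖ ≤ 1 := by
  rw [fromBlocks_nonneg_iff₁₁ .one, inv_one, mul_one, ← star_eq_conjTranspose,
    ← CStarAlgebra.norm_le_one_iff_of_nonneg _ (star_mul_self_nonneg g),
    CStarRing.norm_star_mul_self, ← sq, sq_le_one_iff₀ (norm_nonneg g)]

theorem fromBlocks_mul_mul_nonneg {L g R P Q : Matrix ι ι ℂ} (hg : ‖g‖ ≤ 1) (hL : L * Lᴴ ≤ P)
    (hR : Rᴴ * R ≤ Q) : 0 ≤ fromBlocks P (L * g * R) (L * g * R)ᴴ Q := by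
  refine fromBlocks_nonneg_mono
    (fromBlocks_conjugate_nonneg (fromBlocks_one_nonneg_iff.2 hg) L R) ?_ ?_ <;> simpa

theorem exists_eq_mul_mul_of_fromBlocks_nonneg {S T a : Matrix ι ι ℂ} (hS : S.PosDef)
    (hT : T.PosDef) (h : 0 ≤ fromBlocks (S * S) a aᴴ (T * T)) :
    ∃ g, ‖g‖ ≤ 1 ∧ a = S * g * T := by
  have := hS.isUnit.invertible
  have := hT.isUnit.invertible
  refine ⟨S⁻¹ * a * T⁻¹, fromBlocks_one_nonneg_iff.1 ?_, by simp [Matrix.mul_assoc]⟩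
  simpa [Matrix.mul_assoc, hS.inv.isHermitian.eq, hT.inv.isHermitian.eq] using
    fromBlocks_conjugate_nonneg h S⁻¹ T⁻¹

theorem le_of_mul_inv_mul_le {A X G : Matrix ι ι ℂ} (hA : A.PosDef)
    (hX : IsSelfAdjoint X) (hG : 0 ≤ G) (h : X * A⁻¹ * X ≤ G * A⁻¹ * G) : X ≤ G := by
  set S := CFC.sqrt A
  have hS : IsSelfAdjoint S := (CFC.sqrt_nonneg A).isSelfAdjoint
  have hSinv : IsSelfAdjoint S⁻¹ := IsHermitian.inv hS
  have hSu : IsUnit S := (CFC.isUnit_sqrt_iff A hA.posSemidef.nonneg).2 hA.isUnit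
  have := hSu.invertible
  have hA' : A⁻¹ = S⁻¹ * S⁻¹ := by
    rw [← Matrix.mul_inv_rev, CFC.sqrt_mul_sqrt_self A hA.posSemidef.nonneg]
  have hle : S⁻¹ * X * S⁻¹ ≤ S⁻¹ * G * S⁻¹ := by
    refine le_of_mul_self_le_mul_self (hX.conjugate_self hSinv) (hSinv.conjugate_nonneg hG) ?_
    simpa [hA', Matrix.mul_assoc] using hSinv.conjugate_le_conjugate h
  simpa [Matrix.mul_assoc] using hS.conjugate_le_conjugate hle

end BlockContractions

section KroneckerMean

variable {ι κ : Type*} [Fintype ι] [Fintype κ] [DecidableEq ι] [DecidableEq κ]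

theorem posDef_rpow {A : Matrix ι ι ℂ} (hA : A.PosDef) (s : ℝ) : (A ^ s).PosDef :=
  isStrictlyPositive_iff_posDef.1 (hA.isStrictlyPositive.rpow A s)

theorem rpow_mul_inv_rpow_mul_rpow {X : Matrix ι ι ℂ} (hX : X.PosDef) (u v : ℝ) :
    X ^ ((u + v) / 2) * (X ^ u)⁻¹ * X ^ ((u + v) / 2) = X ^ v := by
  have hinv : (X ^ u)⁻¹ = X ^ (-u) :=
    Matrix.inv_eq_left_inv (CFC.rpow_neg_mul_rpow u hX.isStrictlyPositive)
  rw [hinv, ← CFC.rpow_add hX.isUnit, ← CFC.rpow_add hX.isUnit]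
  ring_nf

/-- The weighted geometric mean of the commuting matrices `X ⊗ 1` and `1 ⊗ Y`, with weight `s` on
`X`. -/
noncomputable def kroneckerMean (s : ℝ) (X : Matrix ι ι ℂ) (Y : Matrix κ κ ℂ) :
    Matrix (ι × κ) (ι × κ) ℂ :=
  (X ^ s) ⊗ₖ (Y ^ (1 - s))

variable {X : Matrix ι ι ℂ} {Y : Matrix κ κ ℂ}

theorem posDef_kroneckerMean (hX : X.PosDef) (hY : Y.PosDef) (s : ℝ) :
    (kroneckerMean s X Y).PosDef :=
  (posDef_rpow hX s).kronecker (posDef_rpow hY _)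

theorem kroneckerMean_midpoint_mul_inv_mul (hX : X.PosDef) (hY : Y.PosDef) (u v : ℝ) :
    kroneckerMean ((u + v) / 2) X Y * (kroneckerMean u X Y)⁻¹ * kroneckerMean ((u + v) / 2) X Y
      = kroneckerMean v X Y := by
  have h : 1 - (u + v) / 2 = ((1 - u) + (1 - v)) / 2 := by ring
  simp only [kroneckerMean, inv_kronecker, ← mul_kronecker_mul, h,
    rpow_mul_inv_rpow_mul_rpow hX, rpow_mul_inv_rpow_mul_rpow hY]

theorem kroneckerMean_zero (hX : 0 ≤ X) (hY : 0 ≤ Y) :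
    kroneckerMean 0 X Y = (1 : Matrix ι ι ℂ) ⊗ₖ Y := by
  rw [kroneckerMean, CFC.rpow_zero X, sub_zero, CFC.rpow_one Y]

theorem kroneckerMean_one (hX : 0 ≤ X) (hY : 0 ≤ Y) :
    kroneckerMean 1 X Y = X ⊗ₖ (1 : Matrix κ κ ℂ) := by
  rw [kroneckerMean, CFC.rpow_one X, sub_self, CFC.rpow_zero Y]

theorem continuous_kroneckerMean (hX : X.PosDef) (hY : Y.PosDef) :
    Continuous fun s => kroneckerMean s X Y := by
  have hX' := continuous_const_rpow hX.isStrictlyPositive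
  have hY' := (continuous_const_rpow hY.isStrictlyPositive).comp (continuous_sub_left 1)
  exact continuous_matrix fun i j =>
    (hX'.matrix_elem i.1 j.1).mul (hY'.matrix_elem i.2 j.2)

theorem fromBlocks_kroneckerMean_nonneg (hX : X.PosDef) (hY : Y.PosDef) (u v : ℝ) :
    0 ≤ fromBlocks (kroneckerMean u X Y) (kroneckerMean ((u + v) / 2) X Y)
      (kroneckerMean ((u + v) / 2) X Y) (kroneckerMean v X Y) := by
  have h := fromBlocks_nonneg_iff₁₁ (posDef_kroneckerMean hX hY u)
    (kroneckerMean ((u + v) / 2) X Y) (kroneckerMean v X Y)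
  rw [(posDef_kroneckerMean hX hY _).isHermitian.eq] at h
  exact h.2 (kroneckerMean_midpoint_mul_inv_mul hX hY u v).le

theorem le_kroneckerMean_midpoint {u v : ℝ} {Z : Matrix (ι × κ) (ι × κ) ℂ} (hX : X.PosDef)
    (hY : Y.PosDef) (hZ : Z.IsHermitian)
    (h : 0 ≤ fromBlocks (kroneckerMean u X Y) Z Z (kroneckerMean v X Y)) :
    Z ≤ kroneckerMean ((u + v) / 2) X Y := by
  refine le_of_mul_inv_mul_le (posDef_kroneckerMean hX hY u) hZ
    (posDef_kroneckerMean hX hY _).posSemidef.nonneg ?_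
  rw [kroneckerMean_midpoint_mul_inv_mul hX hY]
  have := fromBlocks_nonneg_iff₁₁ (posDef_kroneckerMean hX hY u) Z (kroneckerMean v X Y)
  rw [hZ.eq] at this
  exact this.1 h

theorem concaveOn_kroneckerMean_midpoint {u v : ℝ}
    (hu : ConcaveOn ℝ ({A : Matrix ι ι ℂ | A.PosDef} ×ˢ {B : Matrix κ κ ℂ | B.PosDef})
      fun Z => kroneckerMean u Z.1 Z.2)
    (hv : ConcaveOn ℝ ({A : Matrix ι ι ℂ | A.PosDef} ×ˢ {B : Matrix κ κ ℂ | B.PosDef})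
      fun Z => kroneckerMean v Z.1 Z.2) :
    ConcaveOn ℝ ({A : Matrix ι ι ℂ | A.PosDef} ×ˢ {B : Matrix κ κ ℂ | B.PosDef})
      fun Z => kroneckerMean ((u + v) / 2) Z.1 Z.2 := by
  refine ⟨hu.1, fun Z hZ W hW a b ha hb hab => ?_⟩
  have hZW := hu.1 hZ hW ha hb hab
  refine le_kroneckerMean_midpoint hZW.1 hZW.2 ?_ <|
    fromBlocks_nonneg_mono ?_ (hu.2 hZ hW ha hb hab) (hv.2 hZ hW ha hb hab)
  · exact (add_nonneg (smul_nonneg ha (posDef_kroneckerMean hZ.1 hZ.2 _).posSemidef.nonneg)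
      (smul_nonneg hb (posDef_kroneckerMean hW.1 hW.2 _).posSemidef.nonneg)).posSemidef.isHermitian
  · have := add_nonneg
      (fromBlocks_kroneckerMean_nonneg hZ.1 hZ.2 u v |>.posSemidef.smul ha).nonneg
      (fromBlocks_kroneckerMean_nonneg hW.1 hW.2 u v |>.posSemidef.smul hb).nonneg
    simpa only [fromBlocks_smul, fromBlocks_add] using this

theorem isClosed_setOf_concaveOn_kroneckerMean :
    IsClosed {s : ℝ | ConcaveOn ℝ
      ({A : Matrix ι ι ℂ | A.PosDef} ×ˢ {B : Matrix κ κ ℂ | B.PosDef})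
      fun Z => kroneckerMean s Z.1 Z.2} := by
  have hconv := (convex_posDef (𝕜 := ℂ) (ι := ι)).prod (convex_posDef (𝕜 := ℂ) (ι := κ))
  simp only [ConcaveOn, hconv, true_and, Set.ofPred_forall]
  refine isClosed_iInter fun Z => isClosed_iInter fun hZ => isClosed_iInter fun W =>
    isClosed_iInter fun hW => isClosed_iInter fun a => isClosed_iInter fun b =>
    isClosed_iInter fun ha => isClosed_iInter fun hb => isClosed_iInter fun hab => ?_
  have hZW := hconv hZ hW ha hb hab
  exact isClosed_le (((continuous_kroneckerMean hZ.1 hZ.2).const_smul a).add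
    ((continuous_kroneckerMean hW.1 hW.2).const_smul b)) (continuous_kroneckerMean hZW.1 hZW.2)

theorem concaveOn_kroneckerMean_zero :
    ConcaveOn ℝ ({A : Matrix ι ι ℂ | A.PosDef} ×ˢ {B : Matrix κ κ ℂ | B.PosDef})
      fun Z => kroneckerMean 0 Z.1 Z.2 := by
  have hconv := (convex_posDef (𝕜 := ℂ) (ι := ι)).prod (convex_posDef (𝕜 := ℂ) (ι := κ))
  refine ⟨hconv, fun Z hZ W hW a b ha hb hab => le_of_eq ?_⟩
  obtain ⟨hX, hY⟩ := hconv hZ hW ha hb hab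
  beta_reduce
  rw [kroneckerMean_zero hZ.1.posSemidef.nonneg hZ.2.posSemidef.nonneg,
    kroneckerMean_zero hW.1.posSemidef.nonneg hW.2.posSemidef.nonneg,
    kroneckerMean_zero hX.posSemidef.nonneg hY.posSemidef.nonneg, Prod.snd_add, Prod.smul_snd,
    Prod.smul_snd, kronecker_add, kronecker_smul, kronecker_smul]

theorem concaveOn_kroneckerMean_one :
    ConcaveOn ℝ ({A : Matrix ι ι ℂ | A.PosDef} ×ˢ {B : Matrix κ κ ℂ | B.PosDef})
      fun Z => kroneckerMean 1 Z.1 Z.2 := by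
  have hconv := (convex_posDef (𝕜 := ℂ) (ι := ι)).prod (convex_posDef (𝕜 := ℂ) (ι := κ))
  refine ⟨hconv, fun Z hZ W hW a b ha hb hab => le_of_eq ?_⟩
  obtain ⟨hX, hY⟩ := hconv hZ hW ha hb hab
  beta_reduce
  rw [kroneckerMean_one hZ.1.posSemidef.nonneg hZ.2.posSemidef.nonneg,
    kroneckerMean_one hW.1.posSemidef.nonneg hW.2.posSemidef.nonneg,
    kroneckerMean_one hX.posSemidef.nonneg hY.posSemidef.nonneg, Prod.fst_add, Prod.smul_fst,
    Prod.smul_fst, add_kronecker, smul_kronecker, smul_kronecker]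

theorem concaveOn_kroneckerMean {s : ℝ} (hs : s ∈ Set.Icc 0 1) :
    ConcaveOn ℝ ({A : Matrix ι ι ℂ | A.PosDef} ×ˢ {B : Matrix κ κ ℂ | B.PosDef})
      fun Z => kroneckerMean s Z.1 Z.2 :=
  Icc_subset_of_midpoint_mem isClosed_setOf_concaveOn_kroneckerMean concaveOn_kroneckerMean_zero
    concaveOn_kroneckerMean_one (fun _ hu _ hv => concaveOn_kroneckerMean_midpoint hu hv) hs

end KroneckerMean

section Trace

variable {𝕜 ι : Type*} [RCLike 𝕜] [Fintype ι] [DecidableEq ι]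

theorem trace_cfc {A : Matrix ι ι 𝕜} (hA : A.IsHermitian) (f : ℝ → ℝ) :
    (cfc f A).trace = ∑ i, (f (hA.eigenvalues i) : 𝕜) := by
  rw [hA.cfc_eq, IsHermitian.cfc, Unitary.conjStarAlgAut_apply, trace_mul_comm, ← mul_assoc,
    Unitary.coe_star_mul_self, one_mul, trace_diagonal]
  rfl

theorem le_trace_smul_one {A : Matrix ι ι ℂ} (hA : A.PosSemidef) : A ≤ A.trace.re • 1 := by
  rw [← Algebra.algebraMap_eq_smul_one]
  refine le_algebraMap_of_spectrum_le (fun x hx => ?_) hA.isHermitian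
  rw [hA.isHermitian.spectrum_real_eq_range_eigenvalues] at hx
  obtain ⟨i, rfl⟩ := hx
  rw [hA.isHermitian.trace_eq_sum_eigenvalues, Complex.re_sum]
  exact Finset.single_le_sum (f := hA.isHermitian.eigenvalues)
    (fun j _ => hA.eigenvalues_nonneg j) (Finset.mem_univ i)

theorem trace_rpow_re {A : Matrix ι ι ℂ} (hA : A.PosSemidef) (s : ℝ) :
    (A ^ s).trace.re = ∑ i, hA.isHermitian.eigenvalues i ^ s := by
  rw [CFC.rpow_eq_cfc_real hA.nonneg, trace_cfc hA.isHermitian, Complex.re_sum]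
  rfl

end Trace

section Subdensity

variable {ι : Type*} [Fintype ι]

/-- Invertible subnormalized density matrices. Allowing trace less than `1` makes every positive
matrix of trace less than `1` lie below one of them. -/
structure IsSubdensity (X : Matrix ι ι ℂ) : Prop where
  posDef : X.PosDef
  trace_le_one : X.trace.re ≤ 1

theorem convex_setOf_isSubdensity : Convex ℝ {X : Matrix ι ι ℂ | IsSubdensity X} := by
  intro X hX Y hY a b ha hb hab
  refine ⟨convex_posDef hX.posDef hY.posDef ha hb hab, ?_⟩
  rw [trace_add, trace_smul, trace_smul, Complex.add_re, Complex.smul_re, Complex.smul_re]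
  exact (convex_Iic (1 : ℝ)) hX.trace_le_one hY.trace_le_one ha hb hab

theorem exists_isSubdensity_le {B : Matrix ι ι ℂ} (hB : 0 ≤ B) (h : B.trace.re < 1) :
    ∃ X, IsSubdensity X ∧ B ≤ X := by
  obtain ⟨ε, hε, hεB⟩ := exists_pos_mul_lt (sub_pos.2 h) (Fintype.card ι)
  have hone : (ε • (1 : Matrix ι ι ℂ)).PosDef := PosDef.one.smul hε
  refine ⟨B + ε • 1, ⟨PosDef.posSemidef_add hB.posSemidef hone, ?_⟩,
    le_add_of_nonneg_right hone.posSemidef.nonneg⟩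
  rw [trace_add, trace_smul, trace_one, Complex.add_re, Complex.smul_re, Complex.natCast_re,
    smul_eq_mul]
  linarith

variable [DecidableEq ι]

theorem IsSubdensity.le_one {X : Matrix ι ι ℂ} (hX : IsSubdensity X) : X ≤ 1 :=
  calc X ≤ X.trace.re • 1 := le_trace_smul_one hX.posDef.posSemidef
    _ ≤ (1 : ℝ) • 1 := smul_le_smul_of_nonneg_right hX.trace_le_one zero_le_one
    _ = 1 := one_smul ℝ 1

theorem IsSubdensity.rpow_le_one {X : Matrix ι ι ℂ} (hX : IsSubdensity X) {s : ℝ}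
    (hs : s ∈ Set.Icc 0 1) : X ^ s ≤ 1 :=
  (CFC.rpow_le_rpow hs hX.le_one).trans_eq (CFC.one_rpow)

end Subdensity

section Schatten

variable {ι : Type} [Fintype ι] [DecidableEq ι]

theorem opNorm_eq_norm (a : Matrix ι ι ℂ) : opNorm a = ‖a‖ :=
  (Matrix.l2_opNorm_def a).symm

theorem schattenNorm_nonneg (p : ℝ≥0∞) (a : Matrix ι ι ℂ) : 0 ≤ schattenNorm p a := by
  unfold schattenNorm
  split_ifs
  · exact norm_nonneg _
  · exact Real.rpow_nonneg
      (Finset.sum_nonneg fun i _ => Real.rpow_nonneg (Real.sqrt_nonneg _) _) _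

theorem schattenNorm_conjTranspose (p : ℝ≥0∞) (a : Matrix ι ι ℂ) :
    schattenNorm p aᴴ = schattenNorm p a := by
  have heig : (posSemidef_conjTranspose_mul_self aᴴ).isHermitian.eigenvalues =
      (posSemidef_conjTranspose_mul_self a).isHermitian.eigenvalues := by
    rw [IsHermitian.eigenvalues_eq_eigenvalues_iff, conjTranspose_conjTranspose, charpoly_mul_comm]
  rw [schattenNorm, schattenNorm, heig, opNorm_eq_norm, opNorm_eq_norm, l2_opNorm_conjTranspose]

theorem schattenNorm_top (a : Matrix ι ι ℂ) : schattenNorm ∞ a = ‖a‖ := by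
  rw [schattenNorm, if_pos rfl, opNorm_eq_norm]

theorem schattenNorm_eq_trace_rpow {p : ℝ≥0∞} (hp : p ≠ ∞) (a : Matrix ι ι ℂ) :
    schattenNorm p a = ((aᴴ * a) ^ (p.toReal / 2)).trace.re ^ (1 / p.toReal) := by
  have ha := posSemidef_conjTranspose_mul_self a
  rw [schattenNorm, if_neg hp, trace_rpow_re ha]
  congr! 2 with i
  rw [Real.sqrt_eq_rpow, ← Real.rpow_mul (ha.eigenvalues_nonneg i), one_div_mul_eq_div]

theorem schattenNorm_rpow_le_one {p : ℝ≥0∞} (hp : p ≠ 0) {X : Matrix ι ι ℂ}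
    (hX : IsSubdensity X) : schattenNorm (2 * p) (X ^ (p⁻¹.toReal / 2)) ≤ 1 := by
  have hX₀ := hX.posDef.posSemidef.nonneg
  rcases eq_or_ne p ∞ with rfl | hp'
  · rw [ENNReal.mul_top two_ne_zero, schattenNorm_top, ENNReal.inv_top, ENNReal.toReal_zero,
      zero_div, CFC.rpow_zero X]
    exact (CStarAlgebra.norm_le_one_iff_of_nonneg 1).2 le_rfl
  · have hP : 0 < p.toReal := ENNReal.toReal_pos hp hp'
    have hsq : (X ^ (p⁻¹.toReal / 2))ᴴ * X ^ (p⁻¹.toReal / 2) = X ^ p⁻¹.toReal := by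
      rw [(posDef_rpow hX.posDef _).isHermitian.eq, ← CFC.rpow_add hX.posDef.isUnit, add_halves]
    rw [schattenNorm_eq_trace_rpow (ENNReal.mul_ne_top ENNReal.ofNat_ne_top hp'), hsq,
      ENNReal.toReal_mul, ENNReal.toReal_ofNat, mul_div_cancel_left₀ _ two_ne_zero,
      ENNReal.toReal_inv, CFC.rpow_inv_rpow X _ hP.ne' hX.posDef.isStrictlyPositive]
    exact Real.rpow_le_one (Complex.nonneg_iff.1 hX.posDef.posSemidef.trace_nonneg).1
      hX.trace_le_one (by positivity)

theorem trace_rpow_lt_of_schattenNorm_lt {p : ℝ≥0∞} (hp : p ≠ 0) (hp' : p ≠ ∞) {a : Matrix ι ι ℂ}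
    {r : ℝ} (h : schattenNorm (2 * p) a < r) :
    ((aᴴ * a) ^ p.toReal).trace.re < (r ^ 2) ^ p.toReal := by
  have hP : 0 < p.toReal := ENNReal.toReal_pos hp hp'
  have ha : 0 ≤ (aᴴ * a) ^ p.toReal := CFC.rpow_nonneg
  have hr : 0 ≤ r := (schattenNorm_nonneg _ a).trans h.le
  rw [schattenNorm_eq_trace_rpow (ENNReal.mul_ne_top ENNReal.ofNat_ne_top hp'),
    ENNReal.toReal_mul, ENNReal.toReal_ofNat, mul_div_cancel_left₀ _ two_ne_zero, one_div,
    Real.rpow_inv_lt_iff_of_pos (Complex.nonneg_iff.1 ha.posSemidef.trace_nonneg).1 hr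
      (by positivity)] at h
  rwa [← Real.rpow_natCast_mul hr, Nat.cast_ofNat]

theorem exists_isSubdensity_conjTranspose_mul_self_le {p : ℝ≥0∞} (hp : 1 ≤ p) {a : Matrix ι ι ℂ}
    {r : ℝ} (h : schattenNorm (2 * p) a < r) :
    ∃ X, IsSubdensity X ∧ aᴴ * a ≤ r ^ 2 • X ^ p⁻¹.toReal := by
  have hr : 0 < r := (schattenNorm_nonneg _ a).trans_lt h
  rcases eq_or_ne p ∞ with rfl | hp'
  · obtain ⟨X, hX, -⟩ := exists_isSubdensity_le (le_refl (0 : Matrix ι ι ℂ)) (by simp)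
    refine ⟨X, hX, ?_⟩
    rw [ENNReal.mul_top two_ne_zero, schattenNorm_top] at h
    rw [ENNReal.inv_top, ENNReal.toReal_zero, CFC.rpow_zero X hX.posDef.posSemidef.nonneg]
    calc aᴴ * a ≤ algebraMap ℝ _ (‖a‖ ^ 2) := CStarAlgebra.star_mul_le_algebraMap_norm_sq
      _ ≤ r ^ 2 • 1 := by
        rw [Algebra.algebraMap_eq_smul_one]
        gcongr
  · have hP : 1 ≤ p.toReal := by simpa using ENNReal.toReal_mono hp' hp
    have ha : 0 ≤ aᴴ * a := (posSemidef_conjTranspose_mul_self a).nonneg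
    set B := (r ^ 2)⁻¹ • (aᴴ * a) with hB
    have hB₀ : 0 ≤ B := smul_nonneg (by positivity) ha
    have htrace : (B ^ p.toReal).trace.re < 1 := by
      rw [hB, smul_rpow (by positivity) (by positivity) ha, trace_smul, Complex.smul_re,
        Real.inv_rpow (by positivity), smul_eq_mul, inv_mul_lt_one₀ (by positivity)]
      exact trace_rpow_lt_of_schattenNorm_lt (one_pos.trans_le hp).ne' hp' h
    obtain ⟨X, hX, hBX⟩ := exists_isSubdensity_le (CFC.rpow_nonneg (a := B)) htrace
    refine ⟨X, hX, ?_⟩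
    rw [ENNReal.toReal_inv]
    calc aᴴ * a = r ^ 2 • B := (smul_inv_smul₀ (pow_pos hr 2).ne' _).symm
      _ = r ^ 2 • (B ^ p.toReal) ^ p.toReal⁻¹ := by
        rw [CFC.rpow_rpow_of_exponent_nonneg B _ _ (by positivity) (by positivity),
          mul_inv_cancel₀ (by positivity), CFC.rpow_one B]
      _ ≤ r ^ 2 • X ^ p.toReal⁻¹ := by
        refine smul_le_smul_of_nonneg_left ?_ (sq_nonneg r)
        exact CFC.rpow_le_rpow ⟨by positivity, inv_le_one_of_one_le₀ hP⟩ hBX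

end Schatten

section RhoBall

variable {ι κ : Type*} [Fintype ι] [Fintype κ] [DecidableEq ι] [DecidableEq κ] {s : ℝ}

/-- The matrices dominated by a Kronecker mean of two subdensities. Up to the boundary, these are
the `P` with `P ≤ (γ ⊗ α)ᴴ * (γ ⊗ α)` for `γ`, `α` in the unit balls of `S_{2p}`, `S_{2p'}`, where
`s = 1 / p`. -/
def subdensityMean (ι κ : Type*) [Fintype ι] [Fintype κ] [DecidableEq ι] [DecidableEq κ]
    (s : ℝ) : Set (Matrix (ι × κ) (ι × κ) ℂ) :=
  {P | ∃ X Y, IsSubdensity X ∧ IsSubdensity Y ∧ P ≤ kroneckerMean s X Y}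

/-- For `s = 1 / p`, a set between the open and the closed unit ball of `ρ_p`, described by a
condition which is linear in `(P, a, Q)`. -/
def rhoBall (ι κ : Type*) [Fintype ι] [Fintype κ] [DecidableEq ι] [DecidableEq κ]
    (s : ℝ) : Set (Matrix (ι × κ) (ι × κ) ℂ) :=
  {a | ∃ P ∈ subdensityMean ι κ s, ∃ Q ∈ subdensityMean ι κ s, 0 ≤ fromBlocks P a aᴴ Q}

theorem convex_subdensityMean (hs : s ∈ Set.Icc 0 1) : Convex ℝ (subdensityMean ι κ s) := by
  rintro P ⟨X, Y, hX, hY, hP⟩ Q ⟨X', Y', hX', hY', hQ⟩ a b ha hb hab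
  refine ⟨a • X + b • X', a • Y + b • Y', convex_setOf_isSubdensity hX hX' ha hb hab,
    convex_setOf_isSubdensity hY hY' ha hb hab, ?_⟩
  calc a • P + b • Q ≤ a • kroneckerMean s X Y + b • kroneckerMean s X' Y' :=
        add_le_add (smul_le_smul_of_nonneg_left hP ha) (smul_le_smul_of_nonneg_left hQ hb)
    _ ≤ kroneckerMean s (a • X + b • X') (a • Y + b • Y') :=
        (concaveOn_kroneckerMean hs).2 (x := (X, Y)) (y := (X', Y')) ⟨hX.posDef, hY.posDef⟩
          ⟨hX'.posDef, hY'.posDef⟩ ha hb hab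

theorem le_one_of_mem_subdensityMean (hs : s ∈ Set.Icc 0 1) {P : Matrix (ι × κ) (ι × κ) ℂ}
    (hP : P ∈ subdensityMean ι κ s) : P ≤ 1 := by
  obtain ⟨X, Y, hX, hY, hP⟩ := hP
  calc P ≤ kroneckerMean s X Y := hP
    _ ≤ (1 : Matrix ι ι ℂ) ⊗ₖ (1 : Matrix κ κ ℂ) :=
      kronecker_mono (hX.rpow_le_one hs) (hY.rpow_le_one (Set.Icc.one_sub_mem hs)) zero_le_one
        CFC.rpow_nonneg
    _ = 1 := one_kronecker_one

theorem convex_rhoBall (hs : s ∈ Set.Icc 0 1) : Convex ℝ (rhoBall ι κ s) := by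
  rintro x ⟨P, hP, Q, hQ, hx⟩ y ⟨P', hP', Q', hQ', hy⟩ a b ha hb hab
  refine ⟨a • P + b • P', convex_subdensityMean hs hP hP' ha hb hab,
    a • Q + b • Q', convex_subdensityMean hs hQ hQ' ha hb hab, ?_⟩
  have := add_nonneg (smul_nonneg ha hx) (smul_nonneg hb hy)
  rw [conjTranspose_add, conjTranspose_smul, conjTranspose_smul, star_trivial, star_trivial]
  rwa [fromBlocks_smul, fromBlocks_smul, fromBlocks_add] at this

theorem rhoBall_subset_closedBall (hs : s ∈ Set.Icc 0 1) :
    rhoBall ι κ s ⊆ Metric.closedBall 0 1 := by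
  rintro a ⟨P, hP, Q, hQ, ha⟩
  rw [mem_closedBall_zero_iff, ← fromBlocks_one_nonneg_iff]
  exact fromBlocks_nonneg_mono ha (le_one_of_mem_subdensityMean hs hP)
    (le_one_of_mem_subdensityMean hs hQ)

theorem balanced_rhoBall : Balanced ℂ (rhoBall ι κ s) := by
  refine balanced_iff_smul_mem.2 fun c hc a ⟨P, hP, Q, ⟨X, Y, hX, hY, hQ⟩, ha⟩ => ?_
  refine ⟨P, hP, Q, ⟨X, Y, hX, hY, hQ⟩, ?_⟩
  have hQ₀ : 0 ≤ Q := (ha.posSemidef.submatrix Sum.inr).nonneg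
  have hcQ : ‖c‖ ^ 2 • Q ≤ Q := smul_le_of_le_one_left hQ₀ (pow_le_one₀ (norm_nonneg c) hc)
  refine fromBlocks_nonneg_mono ?_ le_rfl hcQ
  simpa [smul_smul, Complex.mul_conj', ← Complex.ofReal_pow, Complex.coe_smul] using
    fromBlocks_conjugate_nonneg ha 1 (c • 1)

theorem inv_smul_mul_mul_mem_rhoBall {L g R P Q : Matrix (ι × κ) (ι × κ) ℂ} {r t u : ℝ}
    (hr : 0 < r) (ht : 0 < t) (hu : 0 < u) (hP : P ∈ subdensityMean ι κ s)
    (hQ : Q ∈ subdensityMean ι κ s) (hL : L * Lᴴ ≤ r ^ 2 • P) (hg : ‖g‖ ≤ t)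
    (hR : Rᴴ * R ≤ u ^ 2 • Q) : (r * t * u)⁻¹ • (L * g * R) ∈ rhoBall ι κ s := by
  have hg' : ‖t⁻¹ • g‖ ≤ 1 := by
    rwa [norm_smul, Real.norm_of_nonneg (by positivity), inv_mul_le_one₀ ht]
  have hL' : (r⁻¹ • L) * (r⁻¹ • L)ᴴ ≤ P := by
    rw [conjTranspose_smul, star_trivial, smul_mul_smul_comm, ← sq, inv_pow]
    exact (inv_smul_le_iff_of_pos (by positivity)).2 hL
  have hR' : (u⁻¹ • R)ᴴ * (u⁻¹ • R) ≤ Q := by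
    rw [conjTranspose_smul, star_trivial, smul_mul_smul_comm, ← sq, inv_pow]
    exact (inv_smul_le_iff_of_pos (by positivity)).2 hR
  have heq : (r * t * u)⁻¹ • (L * g * R) = (r⁻¹ • L) * (t⁻¹ • g) * (u⁻¹ • R) := by
    simp only [smul_mul_smul_comm, mul_inv]
  exact ⟨P, hP, Q, hQ, heq ▸ fromBlocks_mul_mul_nonneg hg' hL' hR'⟩

theorem exists_eq_mul_mul_of_mem_rhoBall {a : Matrix (ι × κ) (ι × κ) ℂ} (ha : a ∈ rhoBall ι κ s) :
    ∃ (X X' : Matrix ι ι ℂ) (Y Y' : Matrix κ κ ℂ) (g : Matrix (ι × κ) (ι × κ) ℂ),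
      IsSubdensity X ∧ IsSubdensity X' ∧ IsSubdensity Y ∧ IsSubdensity Y' ∧ ‖g‖ ≤ 1 ∧
      a = ((X ^ (s / 2)) ⊗ₖ (Y ^ ((1 - s) / 2))) * g *
        ((X' ^ (s / 2)) ⊗ₖ (Y' ^ ((1 - s) / 2))) := by
  obtain ⟨P, ⟨X, Y, hX, hY, hP⟩, Q, ⟨X', Y', hX', hY', hQ⟩, ha⟩ := ha
  have hsq {X : Matrix ι ι ℂ} {Y : Matrix κ κ ℂ} (hX : X.PosDef) (hY : Y.PosDef) :
      kroneckerMean s X Y =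
        ((X ^ (s / 2)) ⊗ₖ (Y ^ ((1 - s) / 2))) * ((X ^ (s / 2)) ⊗ₖ (Y ^ ((1 - s) / 2))) := by
    rw [← mul_kronecker_mul, ← CFC.rpow_add hX.isUnit, ← CFC.rpow_add hY.isUnit, add_halves,
      add_halves, kroneckerMean]
  have ha' := fromBlocks_nonneg_mono ha hP hQ
  rw [hsq hX.posDef hY.posDef, hsq hX'.posDef hY'.posDef] at ha'
  obtain ⟨g, hg, rfl⟩ := exists_eq_mul_mul_of_fromBlocks_nonneg
    ((posDef_rpow hX.posDef _).kronecker (posDef_rpow hY.posDef _))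
    ((posDef_rpow hX'.posDef _).kronecker (posDef_rpow hY'.posDef _)) ha'
  exact ⟨X, X', Y, Y', g, hX, hX', hY, hY', hg, rfl⟩

end RhoBall

section HolderConjugate

variable {ι κ : Type} [Fintype ι] [Fintype κ] [DecidableEq ι] [DecidableEq κ]

theorem toReal_inv_mem_Icc {p : ℝ≥0∞} (hp : 1 ≤ p) : p⁻¹.toReal ∈ Set.Icc 0 1 :=
  ⟨ENNReal.toReal_nonneg, ENNReal.toReal_le_of_le_ofReal zero_le_one <| by simpa⟩

variable {p q : ℝ≥0∞} [p.HolderConjugate q]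

variable (p q) in
theorem one_sub_toReal_inv : 1 - p⁻¹.toReal = q⁻¹.toReal := by
  rw [← ENNReal.HolderConjugate.one_sub_inv p q, ENNReal.toReal_sub_of_le _ ENNReal.one_ne_top,
    ENNReal.toReal_one]
  exact ENNReal.inv_le_one.2 (ENNReal.HolderConjugate.one_le p q)

theorem exists_mem_subdensityMean_conjTranspose_mul_self_le
    {γ : Matrix ι ι ℂ} {α : Matrix κ κ ℂ} {r t : ℝ}
    (hγ : schattenNorm (2 * p) γ < r) (hα : schattenNorm (2 * q) α < t) :
    ∃ P ∈ subdensityMean ι κ p⁻¹.toReal, (γ ⊗ₖ α)ᴴ * (γ ⊗ₖ α) ≤ (r * t) ^ 2 • P := by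
  obtain ⟨X, hX, hγX⟩ := exists_isSubdensity_conjTranspose_mul_self_le
    (ENNReal.HolderConjugate.one_le p q) hγ
  obtain ⟨Y, hY, hαY⟩ := exists_isSubdensity_conjTranspose_mul_self_le
    (ENNReal.HolderConjugate.one_le q p) hα
  refine ⟨kroneckerMean p⁻¹.toReal X Y, ⟨X, Y, hX, hY, le_rfl⟩, ?_⟩
  have hγ₀ := (posSemidef_conjTranspose_mul_self γ).nonneg
  have hα₀ := (posSemidef_conjTranspose_mul_self α).nonneg
  calc (γ ⊗ₖ α)ᴴ * (γ ⊗ₖ α) = (γᴴ * γ) ⊗ₖ (αᴴ * α) := by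
        rw [conjTranspose_kronecker, mul_kronecker_mul]
    _ ≤ (r ^ 2 • X ^ p⁻¹.toReal) ⊗ₖ (t ^ 2 • Y ^ q⁻¹.toReal) :=
        kronecker_mono hγX hαY (hγ₀.trans hγX) hα₀
    _ = (r * t) ^ 2 • kroneckerMean p⁻¹.toReal X Y := by
        rw [smul_kronecker, kronecker_smul, smul_smul, ← mul_pow, kroneckerMean,
          one_sub_toReal_inv p q]

theorem mul_mul_mem_smul_rhoBall {γ δ : Matrix ι ι ℂ} {α β : Matrix κ κ ℂ}
    {g : Matrix (ι × κ) (ι × κ) ℂ} {c d r t u : ℝ} (hγ : schattenNorm (2 * p) γ < c)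
    (hα : schattenNorm (2 * q) α < d) (hg : opNorm g < r) (hδ : schattenNorm (2 * p) δ < t)
    (hβ : schattenNorm (2 * q) β < u) :
    (γ ⊗ₖ α) * g * (δ ⊗ₖ β) ∈ (c * d * r * t * u) • rhoBall ι κ p⁻¹.toReal := by
  have hc : 0 < c := (schattenNorm_nonneg _ _).trans_lt hγ
  have hd : 0 < d := (schattenNorm_nonneg _ _).trans_lt hα
  have hr : 0 < r := (norm_nonneg _).trans_lt hg
  have ht : 0 < t := (schattenNorm_nonneg _ _).trans_lt hδ
  have hu : 0 < u := (schattenNorm_nonneg _ _).trans_lt hβ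
  rw [← schattenNorm_conjTranspose] at hγ hα
  obtain ⟨P, hP, hγα⟩ := exists_mem_subdensityMean_conjTranspose_mul_self_le hγ hα
  obtain ⟨Q, hQ, hδβ⟩ := exists_mem_subdensityMean_conjTranspose_mul_self_le hδ hβ
  rw [← conjTranspose_kronecker, conjTranspose_conjTranspose] at hγα
  rw [Set.mem_smul_set_iff_inv_smul_mem₀ (by positivity), mul_assoc _ t u]
  exact inv_smul_mul_mul_mem_rhoBall (by positivity) hr (by positivity) hP hQ hγα
    (opNorm_eq_norm g ▸ hg.le) hδβ

theorem absorbent_rhoBall {p : ℝ≥0∞} (hp : 1 ≤ p) : Absorbent ℝ (rhoBall ι κ p⁻¹.toReal) := by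
  intro a
  have := ENNReal.HolderConjugate.conjExponent hp
  have hfac := mul_mul_mem_smul_rhoBall
    (lt_add_one (schattenNorm (2 * p) (1 : Matrix ι ι ℂ)))
    (lt_add_one (schattenNorm (2 * p.conjExponent) (1 : Matrix κ κ ℂ))) (lt_add_one (opNorm a))
    (lt_add_one (schattenNorm (2 * p) (1 : Matrix ι ι ℂ)))
    (lt_add_one (schattenNorm (2 * p.conjExponent) (1 : Matrix κ κ ℂ)))
  rw [one_kronecker_one, one_mul, mul_one] at hfac
  have hbal : Balanced ℝ (rhoBall ι κ p⁻¹.toReal) := balanced_iff_smul_mem.2 fun c hc b hb => by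
    rw [← Complex.coe_smul]
    exact balanced_rhoBall.smul_mem (by rwa [Complex.norm_real]) hb
  exact .of_norm ⟨_, fun c hc => Set.singleton_subset_iff.2 <|
    hbal.smul_mono hc hfac⟩

theorem gauge_rhoBall_mul_mul_le {γ δ : Matrix ι ι ℂ} {α β : Matrix κ κ ℂ}
    {g : Matrix (ι × κ) (ι × κ) ℂ} :
    gauge (rhoBall ι κ p⁻¹.toReal) ((γ ⊗ₖ α) * g * (δ ⊗ₖ β)) ≤
      schattenNorm (2 * p) γ * schattenNorm (2 * q) α * opNorm g *
      schattenNorm (2 * p) δ * schattenNorm (2 * q) β := by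
  have hγ := schattenNorm_nonneg (2 * p) γ
  have hα := schattenNorm_nonneg (2 * q) α
  have hg : 0 ≤ opNorm g := norm_nonneg _
  have hδ := schattenNorm_nonneg (2 * p) δ
  have hβ := schattenNorm_nonneg (2 * q) β
  have hcont : Continuous fun η : ℝ => (schattenNorm (2 * p) γ + η) *
      (schattenNorm (2 * q) α + η) * (opNorm g + η) * (schattenNorm (2 * p) δ + η) *
      (schattenNorm (2 * q) β + η) := by fun_prop
  have hlim := (hcont.tendsto 0).mono_left (nhdsWithin_le_nhds (s := Set.Ioi 0))
  simp only [add_zero] at hlim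
  refine ge_of_tendsto hlim (eventually_mem_nhdsWithin.mono fun η (hη : 0 < η) => ?_)
  exact gauge_le_of_mem (by positivity) (mul_mul_mem_smul_rhoBall (lt_add_of_pos_right _ hη)
    (lt_add_of_pos_right _ hη) (lt_add_of_pos_right _ hη) (lt_add_of_pos_right _ hη)
    (lt_add_of_pos_right _ hη))

end HolderConjugate

section Rho

theorem exists_eq_kronecker_mul_mul_kronecker {ι κ : Type*} [Fintype ι] [Fintype κ]
    (a : Matrix (ι × κ) (ι × κ) ℂ) :
    ∃ (γ δ : Matrix ι ι ℂ) (α β : Matrix κ κ ℂ) (g : Matrix (ι × κ) (ι × κ) ℂ),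
      a = (γ ⊗ₖ α) * g * (δ ⊗ₖ β) :=
  ⟨1, 1, 1, 1, a, by rw [one_kronecker_one, one_mul, mul_one]⟩

variable {n m : ℕ} {p q : ℝ≥0∞}

theorem rho_kronecker_mul_mul_kronecker_le (γ δ : Matrix (Fin n) (Fin n) ℂ)
    (α β : Matrix (Fin m) (Fin m) ℂ) (g : Matrix (Fin n × Fin m) (Fin n × Fin m) ℂ) :
    rho p q ((γ ⊗ₖ α) * g * (δ ⊗ₖ β)) ≤ schattenNorm (2 * p) γ * schattenNorm (2 * q) α *
      opNorm g * schattenNorm (2 * p) δ * schattenNorm (2 * q) β := by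
  refine csInf_le ⟨0, ?_⟩ ⟨γ, δ, α, β, g, rfl, rfl⟩
  rintro _ ⟨γ, δ, α, β, g, -, rfl⟩
  have hg : 0 ≤ opNorm g := norm_nonneg _
  have hγα := mul_nonneg (schattenNorm_nonneg (2 * p) γ) (schattenNorm_nonneg (2 * q) α)
  exact mul_nonneg (mul_nonneg (mul_nonneg hγα hg) (schattenNorm_nonneg _ δ))
    (schattenNorm_nonneg _ β)

variable [p.HolderConjugate q]

theorem rho_le_of_mem_smul_rhoBall {r : ℝ} (hr : 0 ≤ r)
    {a : Matrix (Fin n × Fin m) (Fin n × Fin m) ℂ}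
    (ha : a ∈ r • rhoBall (Fin n) (Fin m) p⁻¹.toReal) : rho p q a ≤ r := by
  obtain ⟨b, hb, rfl⟩ := ha
  obtain ⟨X, X', Y, Y', g, hX, hX', hY, hY', hg, rfl⟩ := exists_eq_mul_mul_of_mem_rhoBall hb
  have hp : p ≠ 0 := ENNReal.HolderConjugate.ne_zero p q
  have hq : q ≠ 0 := ENNReal.HolderConjugate.ne_zero q p
  have hrg : opNorm (r • g) ≤ r := by
    rw [opNorm_eq_norm, norm_smul, Real.norm_of_nonneg hr]
    exact mul_le_of_le_one_right hr hg
  beta_reduce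
  rw [one_sub_toReal_inv p q, ← Matrix.smul_mul, ← Matrix.mul_smul]
  refine (rho_kronecker_mul_mul_kronecker_le ..).trans ?_
  calc _ ≤ 1 * 1 * r * 1 * 1 := by
        gcongr <;> apply_rules [schattenNorm_rpow_le_one, schattenNorm_nonneg, norm_nonneg]
    _ = r := by ring

theorem rho_eq_gauge (a : Matrix (Fin n × Fin m) (Fin n × Fin m) ℂ) :
    rho p q a = gauge (rhoBall (Fin n) (Fin m) p⁻¹.toReal) a := by
  apply le_antisymm
  · refine le_of_forall_gt fun r hr => ?_
    obtain ⟨t, ht, htr, ha⟩ := exists_lt_of_gauge_lt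
      (absorbent_rhoBall (ENNReal.HolderConjugate.one_le p q)) hr
    exact (rho_le_of_mem_smul_rhoBall ht.le ha).trans_lt htr
  · obtain ⟨γ, δ, α, β, g, h⟩ := exists_eq_kronecker_mul_mul_kronecker a
    refine le_csInf ⟨_, γ, δ, α, β, g, h, rfl⟩ ?_
    rintro _ ⟨γ, δ, α, β, g, rfl, rfl⟩
    exact gauge_rhoBall_mul_mul_le

theorem eq_zero_of_rho_eq_zero {a : Matrix (Fin n × Fin m) (Fin n × Fin m) ℂ}
    (ha : rho p q a = 0) : a = 0 := by
  have hp := ENNReal.HolderConjugate.one_le p q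
  have hle := le_gauge_of_subset_closedBall (x := a) (absorbent_rhoBall hp) zero_le_one
    (rhoBall_subset_closedBall (toReal_inv_mem_Icc hp))
  rwa [← rho_eq_gauge (q := q), ha, div_one, norm_le_zero_iff] at hle

end Rho

end

/-- Theorem 3.1 (conclusion): `ρ_p` is a norm on `M_n ⊗ M_m`: it is finite everywhere
(every element admits a factorization), absolutely homogeneous, satisfies the triangle
inequality, and vanishes only at `0`. -/
theorem rho_is_norm {n m : ℕ} (hn : 1 ≤ n) (hm : 1 ≤ m) (p q : ℝ≥0∞) (hp : 1 ≤ p)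
    (hpq : p⁻¹ + q⁻¹ = 1) :
    (∀ a : Matrix (Fin n × Fin m) (Fin n × Fin m) ℂ,
      ∃ (γ δ : Matrix (Fin n) (Fin n) ℂ) (α β : Matrix (Fin m) (Fin m) ℂ)
        (g : Matrix (Fin n × Fin m) (Fin n × Fin m) ℂ), a = (γ ⊗ₖ α) * g * (δ ⊗ₖ β)) ∧
    (∀ (c : ℂ) (a : Matrix (Fin n × Fin m) (Fin n × Fin m) ℂ),
      rho p q (c • a) = ‖c‖ * rho p q a) ∧
    (∀ a b : Matrix (Fin n × Fin m) (Fin n × Fin m) ℂ,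
      rho p q (a + b) ≤ rho p q a + rho p q b) ∧
    (∀ a : Matrix (Fin n × Fin m) (Fin n × Fin m) ℂ, rho p q a = 0 → a = 0) := by
  have hconj : p.HolderConjugate q := ENNReal.holderConjugate_iff.2 hpq
  refine ⟨exists_eq_kronecker_mul_mul_kronecker, fun c a => ?_, fun a b => ?_,
    fun a => eq_zero_of_rho_eq_zero⟩
  · rw [rho_eq_gauge, rho_eq_gauge, gauge_smul balanced_rhoBall]
  · simp only [rho_eq_gauge]
    exact gauge_add_le (convex_rhoBall (toReal_inv_mem_Icc hp)) (absorbent_rhoBall hp) a b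
end
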